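/- Let N ≥ 1 and q > 1, let r, ρ > 0 and T ≥ (r+ρ)², and set ℰ_{r+ρ} = {(x,t) : |x|² + t ≤ (r+ρ)²}. There exists C = C(N,q) > 0 such that for every compact set K ⊆ B_r, every η ∈ 𝒯_{r,ρ}(K), and every positive solution u of ∂_t u − Δu + u^q = 0 in Q_∞ whose initial trace vanishes outside K: ∬_{(ℝ^N×(0,T]) \ ℰ_{r+ρ}} u^q dx dt + ∫_{ℝ^N} u(x,T) dx ≤ C ‖R[η]‖_{L^{q'}}^{q'}. -/

import Mathlib

open MeasureTheory Real Set Filter Metric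

noncomputable section

abbrev Euc (N : ℕ) := EuclideanSpace ℝ (Fin N)

/-- Spatial Laplacian of `f : ℝ^N → ℝ`. -/
def lapl {N : ℕ} (f : Euc N → ℝ) (x : Euc N) : ℝ :=
  ∑ i : Fin N,
    fderiv ℝ (fun y => fderiv ℝ f y (EuclideanSpace.single i 1)) x (EuclideanSpace.single i 1)

/-- The capacity `C_{2/q,q'}` of a set `A ⊆ ℝ^N`. -/
def capQ (N : ℕ) (q : ℝ) (A : Set (Euc N)) : ℝ :=
  sInf { c : ℝ | ∃ φ : Euc N → ℝ, ContDiff ℝ (⊤ : ℕ∞) φ ∧ HasCompactSupport φ ∧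
      (∃ U : Set (Euc N), IsOpen U ∧ A ⊆ U ∧ ∀ x ∈ U, 1 ≤ φ x) ∧
      c = (∫ x, φ x ^ (q / (q - 1))) +
          ∫ x, ∫ y, |φ x - φ y| ^ (q / (q - 1)) / ‖x - y‖ ^ ((N : ℝ) + 2 / (q - 1)) }

/-- The spherical shell piece `F_n` of `F` around `x` at time `t`. -/
def shell (N : ℕ) (F : Set (Euc N)) (x : Euc N) (t : ℝ) (n : ℕ) : Set (Euc N) :=
  {y | y ∈ F ∧ Real.sqrt ((n : ℝ) * t) ≤ dist x y ∧ dist x y ≤ Real.sqrt (((n : ℝ) + 1) * t)}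

/-- The parabolic capacitary potential `W_F`. -/
def Wpot (N : ℕ) (q : ℝ) (F : Set (Euc N)) (x : Euc N) (t : ℝ) : ℝ :=
  t ^ (-(N : ℝ) / 2) *
    ∑' n : ℕ,
      Real.sqrt (((n : ℝ) + 1) * t) ^ ((N : ℝ) - 2 / (q - 1)) * Real.exp (-(n : ℝ) / 4) *
        capQ N q ((fun y => (Real.sqrt (((n : ℝ) + 1) * t))⁻¹ • y) '' shell N F x t n)

/-- `u` is a positive solution of `∂ₜu - Δu + u^q = 0` in `Q_∞` whose initial
trace vanishes outside the closed set `F`. -/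
def IsSol (N : ℕ) (q : ℝ) (u : Euc N → ℝ → ℝ) (F : Set (Euc N)) : Prop :=
  ContDiffOn ℝ 2 (fun p : Euc N × ℝ => u p.1 p.2) (Set.univ ×ˢ Set.Ioi (0 : ℝ)) ∧
  (∀ x t, 0 < t → 0 < u x t) ∧
  (∀ x t, 0 < t → deriv (u x) t - lapl (fun y => u y t) x + u x t ^ q = 0) ∧
  (∀ E : Set (Euc N), IsCompact E → E ⊆ Fᶜ →
    Tendsto (fun t => sSup ((fun x => u x t) '' E)) (nhdsWithin 0 (Set.Ioi 0)) (nhds 0))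

/-- The heat potential of a function. -/
def heatPot (N : ℕ) (η : Euc N → ℝ) (x : Euc N) (t : ℝ) : ℝ :=
  ∫ y, (4 * π * t) ^ (-(N : ℝ) / 2) * Real.exp (-‖x - y‖ ^ 2 / (4 * t)) * η y

/-- The heat potential of a measure. -/
def heatPotM (N : ℕ) (μ : Measure (Euc N)) (x : Euc N) (t : ℝ) : ℝ :=
  ∫ y, (4 * π * t) ^ (-(N : ℝ) / 2) * Real.exp (-‖x - y‖ ^ 2 / (4 * t)) ∂μ

/-- The class `𝒯_{r,ρ}(K)` of test functions. -/
def TestFun (N : ℕ) (r ρ : ℝ) (K : Set (Euc N)) (η : Euc N → ℝ) : Prop :=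
  ContDiff ℝ (⊤ : ℕ∞) η ∧ HasCompactSupport η ∧ tsupport η ⊆ Metric.ball (0 : Euc N) (r + ρ) ∧
  (∀ x, 0 ≤ η x ∧ η x ≤ 1) ∧ (∀ x ∈ K, η x = 1)

/-- `‖R[η]‖_{L^{q'}}^{q'} = ∬_{Q_∞} (|∇ℍ[η]|² + |∂ₜℍ[η]|)^{q'} dx dt`. -/
def Rnorm (N : ℕ) (q : ℝ) (η : Euc N → ℝ) : ℝ :=
  ∫ t in Set.Ioi (0 : ℝ), ∫ x,
    (‖fderiv ℝ (fun y => heatPot N η y t) x‖ ^ 2 +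
      |deriv (fun τ => heatPot N η x τ) t|) ^ (q / (q - 1))

/-!
Test the equation with `Φ = (θ - κ)₊ ^ m`, where `θ = (1 - ℍ[η]) ψ`, `m = 2q'` and
`ψ(x, t) = exp (-ε √(1 + |x|²) - μ t)`. Subtracting the level `κ` gives `Φ` compact support in space
and makes it vanish near `K` for small times, where `ℍ[η]` is close to `η = 1`; elsewhere the trace
of `u` is zero, so the initial datum does not contribute. The damping rate `μ ~ ε` absorbs the
derivatives of the weight, so that `∂ₜΦ + ΔΦ ≲ (θ - κ)₊ ^ (m - 2) (R[η] + κ)`, and since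
`(m - 2) q = m`, Young's inequality trades this for half of `u ^ q Φ` plus `R[η] ^ q'` and an error
that vanishes with `κ`. Outside the paraboloid a ball of radius `√t` near `x` misses the support of
`η`, so that `1 - ℍ[η]` is bounded below there. It remains to let `κ → 0` for small `ε` and to
exhaust the domain.
-/

section DirectionalDerivative

variable {E : Type*} [NormedAddCommGroup E] [NormedSpace ℝ E] {f g : E → ℝ} {x v : E}

/-- The derivative of `f` in the direction `v`, as a function of the base point. It gives access
to the coordinates of `fderiv` and to the summands of `lapl`. -/
def dirDeriv (v : E) (f : E → ℝ) : E → ℝ := fun x => fderiv ℝ f x v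

theorem dirDeriv_eq_of_hasFDerivAt {L : E →L[ℝ] ℝ} (h : HasFDerivAt f L x) :
    dirDeriv v f x = L v := by
  rw [dirDeriv, h.fderiv]

theorem abs_dirDeriv_le (v : E) (f : E → ℝ) (x : E) : |dirDeriv v f x| ≤ ‖fderiv ℝ f x‖ * ‖v‖ :=
  (fderiv ℝ f x).le_opNorm v

theorem contDiff_dirDeriv {m n : WithTop ℕ∞} (hf : ContDiff ℝ n f) (hmn : m + 1 ≤ n) (v : E) :
    ContDiff ℝ m (dirDeriv v f) :=
  (hf.fderiv_right hmn).clm_apply contDiff_const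

theorem hasCompactSupport_dirDeriv (hf : HasCompactSupport f) (v : E) :
    HasCompactSupport (dirDeriv v f) :=
  hf.fderiv_apply ℝ v

theorem dirDeriv_add (hf : DifferentiableAt ℝ f x) (hg : DifferentiableAt ℝ g x) :
    dirDeriv v (fun y => f y + g y) x = dirDeriv v f x + dirDeriv v g x :=
  dirDeriv_eq_of_hasFDerivAt (hf.hasFDerivAt.add hg.hasFDerivAt)

theorem dirDeriv_mul (hf : DifferentiableAt ℝ f x) (hg : DifferentiableAt ℝ g x) :
    dirDeriv v (fun y => f y * g y) x = f x * dirDeriv v g x + g x * dirDeriv v f x :=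
  dirDeriv_eq_of_hasFDerivAt (hf.hasFDerivAt.mul hg.hasFDerivAt)

theorem dirDeriv_comp {G : ℝ → ℝ} {G' : ℝ} (hG : HasDerivAt G G' (f x))
    (hf : DifferentiableAt ℝ f x) : dirDeriv v (fun y => G (f y)) x = G' * dirDeriv v f x :=
  dirDeriv_eq_of_hasFDerivAt (hG.comp_hasFDerivAt x hf.hasFDerivAt)

theorem dirDeriv_comp_sub_left (hf : Differentiable ℝ f) (v a : E) :
    dirDeriv v (fun y => f (a - y)) = fun y => -dirDeriv v f (a - y) := by
  funext y
  have chain := (hf (a - y)).hasFDerivAt.comp y ((hasFDerivAt_id y).const_sub a)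
  exact (dirDeriv_eq_of_hasFDerivAt chain).trans (map_neg (fderiv ℝ f (a - y)) v)

end DirectionalDerivative

section Laplacian

variable {N : ℕ} {f g : Euc N → ℝ}

theorem lapl_eq_sum_dirDeriv (f : Euc N → ℝ) (x : Euc N) :
    lapl f x =
      ∑ i, dirDeriv (EuclideanSpace.single i 1) (dirDeriv (EuclideanSpace.single i 1) f) x :=
  rfl

theorem sum_sq_dirDeriv (f : Euc N → ℝ) (x : Euc N) :
    ∑ i, dirDeriv (EuclideanSpace.single i 1) f x ^ 2 = ‖fderiv ℝ f x‖ ^ 2 := by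
  simpa [dirDeriv] using ((EuclideanSpace.basisFun (Fin N) ℝ).norm_dual (fderiv ℝ f x)).symm

theorem abs_sum_dirDeriv_mul_dirDeriv_le (f g : Euc N → ℝ) (x : Euc N) :
    |∑ i, dirDeriv (EuclideanSpace.single i 1) f x * dirDeriv (EuclideanSpace.single i 1) g x| ≤
      ‖fderiv ℝ f x‖ * ‖fderiv ℝ g x‖ := by
  refine abs_le_of_sq_le_sq ?_ (by positivity)
  rw [mul_pow, ← sum_sq_dirDeriv, ← sum_sq_dirDeriv]
  exact Finset.sum_mul_sq_le_sq_mul_sq _ _ _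

theorem continuous_dirDeriv_dirDeriv (hf : ContDiff ℝ 2 f) (v : Euc N) :
    Continuous (dirDeriv v (dirDeriv v f)) :=
  (contDiff_dirDeriv (m := 0) (contDiff_dirDeriv (m := 1) hf le_rfl v) (by simp) v).continuous

theorem continuous_lapl (hf : ContDiff ℝ 2 f) : Continuous (lapl f) :=
  continuous_finsetSum _ fun _ _ => continuous_dirDeriv_dirDeriv hf _

theorem tsupport_lapl_subset (f : Euc N → ℝ) : tsupport (lapl f) ⊆ tsupport f := by
  refine closure_minimal (fun x hx => ?_) (isClosed_tsupport f)
  obtain ⟨i, -, hi⟩ := Finset.exists_ne_zero_of_sum_ne_zero hx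
  exact tsupport_fderiv_apply_subset ℝ _ (tsupport_fderiv_apply_subset ℝ _ (subset_tsupport _ hi))

theorem hasCompactSupport_lapl (hf : HasCompactSupport f) : HasCompactSupport (lapl f) :=
  hf.mono' ((subset_tsupport _).trans (tsupport_lapl_subset f))

theorem lapl_mul (hf : ContDiff ℝ 2 f) (hg : ContDiff ℝ 2 g) (x : Euc N) :
    lapl (fun y => f y * g y) x = f x * lapl g x + g x * lapl f x +
      2 * ∑ i, dirDeriv (EuclideanSpace.single i 1) f x *
        dirDeriv (EuclideanSpace.single i 1) g x := by
  have df := hf.differentiable two_ne_zero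
  have dg := hg.differentiable two_ne_zero
  have second (v : Euc N) : dirDeriv v (dirDeriv v fun y => f y * g y) x =
      f x * dirDeriv v (dirDeriv v g) x + g x * dirDeriv v (dirDeriv v f) x +
        2 * (dirDeriv v f x * dirDeriv v g x) := by
    have ddf := (contDiff_dirDeriv (m := 1) hf le_rfl v).differentiable one_ne_zero
    have ddg := (contDiff_dirDeriv (m := 1) hg le_rfl v).differentiable one_ne_zero
    rw [show dirDeriv v (fun y => f y * g y) = fun y => f y * dirDeriv v g y + g y * dirDeriv v f y
      from funext fun y => dirDeriv_mul (df y) (dg y), dirDeriv_add, dirDeriv_mul (df x) (ddg x),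
      dirDeriv_mul (dg x) (ddf x)]
    · ring
    · exact (df x).mul (ddg x)
    · exact (dg x).mul (ddf x)
  simp only [lapl_eq_sum_dirDeriv, second, Finset.sum_add_distrib, Finset.mul_sum]

theorem lapl_comp {G G' G'' : ℝ → ℝ} (hf : ContDiff ℝ 2 f)
    (hG : ∀ y, HasDerivAt G (G' (f y)) (f y)) (hG' : ∀ y, HasDerivAt G' (G'' (f y)) (f y))
    (x : Euc N) :
    lapl (fun y => G (f y)) x = G' (f x) * lapl f x + G'' (f x) * ‖fderiv ℝ f x‖ ^ 2 := by
  have df := hf.differentiable two_ne_zero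
  have second (v : Euc N) : dirDeriv v (dirDeriv v fun y => G (f y)) x =
      G' (f x) * dirDeriv v (dirDeriv v f) x + G'' (f x) * dirDeriv v f x ^ 2 := by
    have ddf := (contDiff_dirDeriv (m := 1) hf le_rfl v).differentiable one_ne_zero
    rw [show dirDeriv v (fun y => G (f y)) = fun y => G' (f y) * dirDeriv v f y
      from funext fun y => dirDeriv_comp (hG y) (df y), dirDeriv_mul _ (ddf x),
      dirDeriv_comp (hG' x) (df x)]
    · ring
    · exact (hG' x).differentiableAt.comp x (df x)
  simp only [lapl_eq_sum_dirDeriv, second, Finset.sum_add_distrib, ← Finset.mul_sum,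
    sum_sq_dirDeriv]

theorem lapl_comp_sub_left (hf : ContDiff ℝ 2 f) (a y : Euc N) :
    lapl (fun y => f (a - y)) y = lapl f (a - y) := by
  have second (v : Euc N) :
      dirDeriv v (dirDeriv v fun y => f (a - y)) y = dirDeriv v (dirDeriv v f) (a - y) := by
    have hf' := (contDiff_dirDeriv (m := 1) hf le_rfl v).differentiable one_ne_zero
    rw [dirDeriv_comp_sub_left (hf.differentiable two_ne_zero),
      dirDeriv_comp_sub_left (f := fun z => -dirDeriv v f z) hf'.neg]
    simp only [dirDeriv, fderiv_fun_neg, neg_apply, neg_neg]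
    rfl
  simp only [lapl_eq_sum_dirDeriv, second]

theorem integral_mul_dirDeriv_eq_neg (hf : ContDiff ℝ 1 f) (hg : ContDiff ℝ 1 g)
    (hc : HasCompactSupport g) (v : Euc N) :
    ∫ x, f x * dirDeriv v g x = -∫ x, dirDeriv v f x * g x := by
  have hf' := contDiff_dirDeriv (m := 0) hf le_rfl v
  have hg' := contDiff_dirDeriv (m := 0) hg le_rfl v
  refine integral_mul_fderiv_eq_neg_fderiv_mul_of_integrable ?_ ?_ ?_
    (fun x _ => hf.differentiable one_ne_zero x) (fun x _ => hg.differentiable one_ne_zero x)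
  · exact (hf'.continuous.mul hg.continuous).integrable_of_hasCompactSupport hc.mul_left
  · exact (hf.continuous.mul hg'.continuous).integrable_of_hasCompactSupport
      (hasCompactSupport_dirDeriv hc v).mul_left
  · exact (hf.continuous.mul hg.continuous).integrable_of_hasCompactSupport hc.mul_left

theorem integral_mul_lapl_eq (hf : ContDiff ℝ 2 f) (hg : ContDiff ℝ 2 g)
    (hc : HasCompactSupport g) : ∫ x, f x * lapl g x = ∫ x, lapl f x * g x := by
  simp only [lapl_eq_sum_dirDeriv, Finset.mul_sum, Finset.sum_mul]
  rw [integral_finsetSum, integral_finsetSum]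
  · refine Finset.sum_congr rfl fun i _ => ?_
    have hf' := contDiff_dirDeriv (m := 1) hf le_rfl (EuclideanSpace.single i 1)
    have hg' := contDiff_dirDeriv (m := 1) hg le_rfl (EuclideanSpace.single i 1)
    rw [integral_mul_dirDeriv_eq_neg (hf.of_le one_le_two) hg' (hasCompactSupport_dirDeriv hc _),
      integral_mul_dirDeriv_eq_neg hf' (hg.of_le one_le_two) hc, neg_neg]
  · exact fun i _ => ((continuous_dirDeriv_dirDeriv hf _).mul
      hg.continuous).integrable_of_hasCompactSupport hc.mul_left
  · exact fun i _ => (hf.continuous.mul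
      (continuous_dirDeriv_dirDeriv hg _)).integrable_of_hasCompactSupport
      (hasCompactSupport_dirDeriv (hasCompactSupport_dirDeriv hc _) _).mul_left

end Laplacian

section SpaceTime

theorem univ_prod_Ioi_mem_nhds {X : Type*} [TopologicalSpace X] {t : ℝ} (ht : 0 < t) (x : X) :
    univ ×ˢ Ioi (0 : ℝ) ∈ nhds (x, t) :=
  (isOpen_univ.prod isOpen_Ioi).mem_nhds ⟨mem_univ x, ht⟩

variable {E : Type*} [NormedAddCommGroup E] [NormedSpace ℝ E] {u : E → ℝ → ℝ}
  {n : WithTop ℕ∞} {t : ℝ}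

theorem contDiff_slice (hu : ContDiffOn ℝ n (fun p : E × ℝ => u p.1 p.2) (univ ×ˢ Ioi 0))
    (ht : 0 < t) : ContDiff ℝ n fun x => u x t :=
  contDiff_iff_contDiffAt.2 fun x => (hu.contDiffAt (univ_prod_Ioi_mem_nhds ht x)).comp x
    (f := fun y => (y, t)) (by fun_prop)

theorem hasFDerivAt_uncurry (hu : ContDiffOn ℝ 1 (fun p : E × ℝ => u p.1 p.2) (univ ×ˢ Ioi 0))
    (ht : 0 < t) (x : E) :
    HasFDerivAt (fun p : E × ℝ => u p.1 p.2) (fderiv ℝ (fun p : E × ℝ => u p.1 p.2) (x, t))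
      (x, t) :=
  ((hu.contDiffAt (univ_prod_Ioi_mem_nhds ht x)).differentiableAt one_ne_zero).hasFDerivAt

theorem hasDerivAt_slice (hu : ContDiffOn ℝ 1 (fun p : E × ℝ => u p.1 p.2) (univ ×ˢ Ioi 0))
    (ht : 0 < t) (x : E) : HasDerivAt (u x) (deriv (u x) t) t :=
  ((hasFDerivAt_uncurry hu ht x).comp t (hasFDerivAt_prodMk_right x t)).differentiableAt.hasDerivAt

theorem continuousOn_deriv_slice
    (hu : ContDiffOn ℝ 1 (fun p : E × ℝ => u p.1 p.2) (univ ×ˢ Ioi 0)) :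
    ContinuousOn (fun p : E × ℝ => deriv (u p.1) p.2) (univ ×ˢ Ioi 0) := by
  refine ((hu.continuousOn_fderiv_of_isOpen (isOpen_univ.prod isOpen_Ioi) le_rfl).clm_apply
    (g := fun _ => (0, 1)) continuousOn_const).congr ?_
  rintro ⟨x, t⟩ ⟨-, ht⟩
  exact ((hasFDerivAt_uncurry hu ht x).comp t (hasFDerivAt_prodMk_right x t)).hasDerivAt.deriv

theorem contDiffOn_dirDeriv_slice {m : WithTop ℕ∞}
    (hu : ContDiffOn ℝ n (fun p : E × ℝ => u p.1 p.2) (univ ×ˢ Ioi 0)) (hmn : m + 1 ≤ n) (v : E) :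
    ContDiffOn ℝ m (fun p : E × ℝ => dirDeriv v (fun y => u y p.2) p.1) (univ ×ˢ Ioi 0) := by
  refine ((hu.fderiv_of_isOpen (isOpen_univ.prod isOpen_Ioi) hmn).clm_apply
    (g := fun _ => (v, 0)) contDiffOn_const).congr ?_
  rintro ⟨x, t⟩ ⟨-, ht⟩
  have hu₁ := hu.of_le (le_add_self.trans hmn)
  exact dirDeriv_eq_of_hasFDerivAt
    ((hasFDerivAt_uncurry hu₁ ht x).comp x (hasFDerivAt_prodMk_left x t))

end SpaceTime

section SpaceTimeLaplacian

variable {N : ℕ} {u : Euc N → ℝ → ℝ}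

theorem continuousOn_norm_sq_fderiv_slice
    (hu : ContDiffOn ℝ 1 (fun p : Euc N × ℝ => u p.1 p.2) (univ ×ˢ Ioi 0)) :
    ContinuousOn (fun p : Euc N × ℝ => ‖fderiv ℝ (fun y => u y p.2) p.1‖ ^ 2) (univ ×ˢ Ioi 0) := by
  simp only [← sum_sq_dirDeriv]
  exact continuousOn_finsetSum _ fun i _ =>
    (contDiffOn_dirDeriv_slice (m := 0) hu le_rfl _).continuousOn.pow 2

theorem continuousOn_lapl_slice
    (hu : ContDiffOn ℝ 2 (fun p : Euc N × ℝ => u p.1 p.2) (univ ×ˢ Ioi 0)) :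
    ContinuousOn (fun p : Euc N × ℝ => lapl (fun y => u y p.2) p.1) (univ ×ˢ Ioi 0) :=
  continuousOn_finsetSum _ fun _ _ => (contDiffOn_dirDeriv_slice (m := 0)
    (u := fun x t => dirDeriv _ (fun y => u y t) x)
    (contDiffOn_dirDeriv_slice (m := 1) hu le_rfl _) le_rfl _).continuousOn

end SpaceTimeLaplacian

section HeatKernel

variable {N : ℕ} {t : ℝ}

/-- The Gauss kernel `(4πt)^{-N/2} exp(-|z|²/4t)`, so that `heatPot N η x t` is by definition
the integral of `heatKernel t (x - y) * η y`. -/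
def heatKernel (t : ℝ) (z : Euc N) : ℝ :=
  (4 * π * t) ^ (-(N : ℝ) / 2) * rexp (-‖z‖ ^ 2 / (4 * t))

theorem heatPot_eq_integral (η : Euc N → ℝ) (x : Euc N) (t : ℝ) :
    heatPot N η x t = ∫ y, heatKernel t (x - y) * η y :=
  rfl

theorem heatKernel_pos (ht : 0 < t) (z : Euc N) : 0 < heatKernel t z := by
  unfold heatKernel; positivity

theorem integral_heatKernel (ht : 0 < t) : ∫ z : Euc N, heatKernel t z = 1 := by
  have gauss := GaussianFourier.integral_rexp_neg_mul_sq_norm (V := Euc N)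
    (b := 1 / (4 * t)) (by positivity)
  have exponent (z : Euc N) : -‖z‖ ^ 2 / (4 * t) = -(1 / (4 * t)) * ‖z‖ ^ 2 := by ring
  simp only [heatKernel, exponent]
  rw [integral_const_mul, gauss, finrank_euclideanSpace, Fintype.card_fin,
    show π / (1 / (4 * t)) = 4 * π * t by field_simp, ← rpow_add (by positivity),
    neg_div, neg_add_cancel, rpow_zero]

theorem integrable_heatKernel (ht : 0 < t) : Integrable (heatKernel t : Euc N → ℝ) :=
  .of_integral_ne_zero (by rw [integral_heatKernel ht]; exact one_ne_zero)

theorem contDiffOn_heatKernel :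
    ContDiffOn ℝ 2 (fun p : Euc N × ℝ => heatKernel p.2 p.1) (univ ×ˢ Ioi 0) := by
  have num : ContDiffOn ℝ 2 (fun p : Euc N × ℝ => -‖p.1‖ ^ 2) (univ ×ˢ Ioi 0) :=
    (contDiff_fst.norm_sq ℝ).neg.contDiffOn
  refine ContDiffOn.mul (ContDiffOn.rpow_const_of_ne (by fun_prop) ?_)
    (num.div (by fun_prop) ?_).exp <;>
  · rintro ⟨z, t⟩ ⟨-, ht : 0 < t⟩
    positivity

theorem hasFDerivAt_heatKernel (t : ℝ) (z : Euc N) :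
    HasFDerivAt (heatKernel t) (-(heatKernel t z / (2 * t)) • innerSL ℝ z) z := by
  have exponent := ((hasStrictFDerivAt_norm_sq z).hasFDerivAt.neg.mul_const (4 * t)⁻¹).exp.const_mul
    ((4 * π * t) ^ (-(N : ℝ) / 2))
  refine exponent.congr_fderiv ?_
  ext v
  simp [heatKernel, div_eq_mul_inv]
  ring

theorem contDiff_heatKernel (t : ℝ) : ContDiff ℝ 2 (heatKernel t : Euc N → ℝ) :=
  contDiff_const.mul ((contDiff_id.norm_sq ℝ).neg.div_const _).exp

theorem dirDeriv_heatKernel (t : ℝ) (v : Euc N) :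
    dirDeriv v (heatKernel t) = fun z => -(inner ℝ z v / (2 * t)) * heatKernel t z := by
  funext z
  rw [dirDeriv_eq_of_hasFDerivAt (hasFDerivAt_heatKernel t z)]
  simp only [smul_apply, innerSL_apply_apply, smul_eq_mul]
  ring

theorem dirDeriv_dirDeriv_heatKernel (t : ℝ) (v z : Euc N) :
    dirDeriv v (dirDeriv v (heatKernel t)) z =
      (inner ℝ z v ^ 2 / (4 * t ^ 2) - ‖v‖ ^ 2 / (2 * t)) * heatKernel t z := by
  have linear : HasFDerivAt (fun z : Euc N => -(inner ℝ z v / (2 * t)))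
      (-((2 * t)⁻¹ • innerSL ℝ v)) z := by
    refine (((innerSL ℝ v).hasFDerivAt (x := z)).const_smul (2 * t)⁻¹).neg.congr_of_eventuallyEq
      (.of_forall fun y => ?_)
    simp [real_inner_comm, div_eq_inv_mul]
  rw [dirDeriv_heatKernel, dirDeriv_mul linear.differentiableAt
    (hasFDerivAt_heatKernel t z).differentiableAt, dirDeriv_heatKernel,
    dirDeriv_eq_of_hasFDerivAt linear]
  simp
  ring

theorem lapl_heatKernel (t : ℝ) (z : Euc N) :
    lapl (heatKernel t) z = (‖z‖ ^ 2 / (4 * t ^ 2) - N / (2 * t)) * heatKernel t z := by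
  have norm_single (i : Fin N) : ‖(EuclideanSpace.single i 1 : Euc N)‖ = 1 := by simp
  have inner_single (i : Fin N) : inner ℝ z (EuclideanSpace.single i 1) = z i := by
    simp [EuclideanSpace.inner_single_right]
  simp only [lapl_eq_sum_dirDeriv, dirDeriv_dirDeriv_heatKernel, norm_single, inner_single,
    ← Finset.sum_mul, Finset.sum_sub_distrib, ← Finset.sum_div, EuclideanSpace.real_norm_sq_eq z,
    Finset.sum_const, Finset.card_univ, Fintype.card_fin, one_pow, nsmul_eq_mul, mul_one]

theorem hasDerivAt_heatKernel (ht : 0 < t) (z : Euc N) :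
    HasDerivAt (fun τ => heatKernel τ z) (lapl (heatKernel t) z) t := by
  have factor := ((hasDerivAt_id t).const_mul (4 * π)).rpow_const (p := -(N : ℝ) / 2)
    (Or.inl (by simp only [id]; positivity))
  have exponent := (((hasDerivAt_id t).const_mul 4).inv (by simp only [id]; positivity)).const_mul
    (-‖z‖ ^ 2)
  refine (factor.mul exponent.exp).congr_deriv ?_
  simp only [id, lapl_heatKernel, heatKernel]
  rw [rpow_sub_one (by positivity)]
  simp
  field_simp
  ring

theorem heatKernel_eq_heatKernel_two_mul (ht : 0 < t) (z : Euc N) :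
    heatKernel t z =
      2 ^ ((N : ℝ) / 2) * heatKernel (2 * t) z * rexp (-‖z‖ ^ 2 / (8 * t)) := by
  have factor : (4 * π * t) ^ (-(N : ℝ) / 2) =
      2 ^ ((N : ℝ) / 2) * (4 * π * (2 * t)) ^ (-(N : ℝ) / 2) := by
    rw [show 4 * π * (2 * t) = 2 * (4 * π * t) by ring, mul_rpow two_pos.le (by positivity),
      ← mul_assoc, ← rpow_add two_pos, neg_div, add_neg_cancel, rpow_zero, one_mul]
  have exponent : rexp (-‖z‖ ^ 2 / (4 * t)) =
      rexp (-‖z‖ ^ 2 / (4 * (2 * t))) * rexp (-‖z‖ ^ 2 / (8 * t)) := by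
    rw [← exp_add]
    congr 1
    field_simp
    ring
  rw [heatKernel, heatKernel, factor, exponent]
  ring

theorem sq_mul_exp_neg_sq_div_le {b : ℝ} (hb : 0 < b) (a : ℝ) : a ^ 2 * rexp (-a ^ 2 / b) ≤ b := by
  have tangent := add_one_le_exp (a ^ 2 / b)
  rw [neg_div, exp_neg, ← div_eq_mul_inv, div_le_iff₀ (exp_pos _), ← div_le_iff₀' hb]
  linarith

theorem heatKernel_le_heatKernel_two_mul (ht : 0 < t) (z : Euc N) :
    heatKernel t z ≤ 2 ^ ((N : ℝ) / 2) * heatKernel (2 * t) z := by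
  have pos := heatKernel_pos (mul_pos two_pos ht) z
  rw [heatKernel_eq_heatKernel_two_mul ht]
  refine mul_le_of_le_one_right (by positivity) (exp_le_one_iff.2 ?_)
  exact div_nonpos_of_nonpos_of_nonneg (neg_nonpos.2 (sq_nonneg _)) (by positivity)

theorem norm_sq_mul_heatKernel_le (ht : 0 < t) (z : Euc N) :
    ‖z‖ ^ 2 * heatKernel t z ≤ 8 * t * (2 ^ ((N : ℝ) / 2) * heatKernel (2 * t) z) := by
  have pos := heatKernel_pos (mul_pos two_pos ht) z
  rw [heatKernel_eq_heatKernel_two_mul ht, mul_left_comm, mul_comm (8 * t)]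
  exact mul_le_mul_of_nonneg_left (sq_mul_exp_neg_sq_div_le (by positivity) ‖z‖) (by positivity)

theorem norm_mul_heatKernel_le (ht : 0 < t) (z : Euc N) :
    ‖z‖ * heatKernel t z ≤ 6 * √t * (2 ^ ((N : ℝ) / 2) * heatKernel (2 * t) z) := by
  set k₂ := 2 ^ ((N : ℝ) / 2) * heatKernel (2 * t) z
  have sqrt_pos := sqrt_pos.2 ht
  have k_pos := heatKernel_pos ht z
  have k₂_pos : 0 < k₂ := mul_pos (by positivity) (heatKernel_pos (by positivity) z)
  have zeroth := mul_le_mul_of_nonneg_left (heatKernel_le_heatKernel_two_mul ht z) ht.le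
  have second := norm_sq_mul_heatKernel_le ht z
  have am_gm : 2 * ‖z‖ * √t ≤ ‖z‖ ^ 2 + t :=
    (two_mul_le_add_sq ‖z‖ √t).trans_eq (by rw [sq_sqrt ht.le])
  refine le_of_mul_le_mul_left ?_ (mul_pos two_pos sqrt_pos)
  calc 2 * √t * (‖z‖ * heatKernel t z) = 2 * ‖z‖ * √t * heatKernel t z := by ring
    _ ≤ (‖z‖ ^ 2 + t) * heatKernel t z := by gcongr
    _ ≤ 9 * t * k₂ := by linarith
    _ ≤ 12 * t * k₂ := by gcongr; norm_num
    _ = 2 * √t * (6 * √t * k₂) := by linear_combination -12 * k₂ * sq_sqrt ht.le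

end HeatKernel

section HeatPotential

variable {N : ℕ} {η ζ : Euc N → ℝ} {t : ℝ}

theorem integrable_heatKernel_sub (ht : 0 < t) (x : Euc N) :
    Integrable fun y => heatKernel t (x - y) :=
  (integrable_heatKernel ht).comp_sub_left x

theorem integral_heatKernel_sub (ht : 0 < t) (x : Euc N) : ∫ y, heatKernel t (x - y) = 1 := by
  rw [integral_sub_left_eq_self (heatKernel t) volume x, integral_heatKernel ht]

theorem integrable_heatKernel_sub_mul (hη : Continuous η) (hc : HasCompactSupport η) (x : Euc N)
    (t : ℝ) : Integrable fun y => heatKernel t (x - y) * η y := by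
  have := (contDiff_heatKernel (N := N) t).continuous
  exact Continuous.integrable_of_hasCompactSupport (by fun_prop) hc.mul_left

theorem heatPot_nonneg (h : ∀ y, 0 ≤ η y) (ht : 0 < t) (x : Euc N) : 0 ≤ heatPot N η x t :=
  integral_nonneg fun y => mul_nonneg (heatKernel_pos ht _).le (h y)

theorem heatPot_const_mul (c : ℝ) (η : Euc N → ℝ) (x : Euc N) (t : ℝ) :
    heatPot N (fun y => c * η y) x t = c * heatPot N η x t := by
  simp only [heatPot_eq_integral, mul_left_comm _ c, integral_const_mul]

theorem heatPot_add (hη : Continuous η) (hcη : HasCompactSupport η) (hζ : Continuous ζ)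
    (hcζ : HasCompactSupport ζ) (x : Euc N) (t : ℝ) :
    heatPot N (fun y => η y + ζ y) x t = heatPot N η x t + heatPot N ζ x t := by
  simp only [heatPot_eq_integral, mul_add]
  exact integral_add (integrable_heatKernel_sub_mul hη hcη x t)
    (integrable_heatKernel_sub_mul hζ hcζ x t)

theorem heatPot_le {M : ℝ} (hη : Continuous η) (hc : HasCompactSupport η) (h : ∀ y, η y ≤ M)
    (ht : 0 < t) (x : Euc N) : heatPot N η x t ≤ M :=
  calc heatPot N η x t ≤ ∫ y, heatKernel t (x - y) * M :=
        integral_mono (integrable_heatKernel_sub_mul hη hc x t)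
          ((integrable_heatKernel_sub ht x).mul_const M)
          fun y => mul_le_mul_of_nonneg_left (h y) (heatKernel_pos ht _).le
    _ = M := by rw [integral_mul_const, integral_heatKernel_sub ht, one_mul]

theorem abs_heatPot_le (hζ : Continuous ζ) (hc : HasCompactSupport ζ) (h : ∀ y, |η y| ≤ ζ y)
    (ht : 0 < t) (x : Euc N) : |heatPot N η x t| ≤ heatPot N ζ x t := by
  refine norm_integral_le_of_norm_le (f := fun y => heatKernel t (x - y) * η y)
    (integrable_heatKernel_sub_mul hζ hc x t) (.of_forall fun y => ?_)
  rw [norm_mul, norm_of_nonneg (heatKernel_pos ht _).le]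
  exact mul_le_mul_of_nonneg_left (h y) (heatKernel_pos ht _).le

theorem heatPot_eq_convolution (η : Euc N → ℝ) (t : ℝ) :
    (fun x => heatPot N η x t) =
      convolution (heatKernel t) η (.mul ℝ ℝ) volume := by
  funext x
  exact (convolution_mul_swap (𝕜 := ℝ) (μ := volume) (f := heatKernel t) (g := η)).symm

theorem integrable_heatPot (hη : Integrable η) (ht : 0 < t) :
    Integrable fun x => heatPot N η x t := by
  rw [heatPot_eq_convolution]
  exact (integrable_heatKernel ht).integrable_convolution _ hη

theorem integral_heatPot (hη : Integrable η) (ht : 0 < t) :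
    ∫ x, heatPot N η x t = ∫ x, η x := by
  rw [heatPot_eq_convolution, integral_convolution _ (integrable_heatKernel ht) hη,
    integral_heatKernel ht, ContinuousLinearMap.mul_apply', one_mul]

theorem dirDeriv_heatPot (hη : ContDiff ℝ 1 η) (hc : HasCompactSupport η) (v : Euc N) (t : ℝ) :
    dirDeriv v (fun x => heatPot N η x t) = fun x => heatPot N (dirDeriv v η) x t := by
  have loc := (contDiff_heatKernel (N := N) t).continuous.locallyIntegrable (μ := volume)
  rw [heatPot_eq_convolution, heatPot_eq_convolution]
  funext x
  rw [dirDeriv_eq_of_hasFDerivAt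
    (hc.hasFDerivAt_convolution_right (ContinuousLinearMap.mul ℝ ℝ) loc hη x)]
  exact convolution_precompR_apply _ loc (hc.fderiv ℝ) (hη.continuous_fderiv one_ne_zero) x v

theorem lapl_heatPot (hη : ContDiff ℝ 2 η) (hc : HasCompactSupport η) (x : Euc N) (t : ℝ) :
    lapl (fun y => heatPot N η y t) x = heatPot N (lapl η) x t := by
  have hη' (v : Euc N) : ContDiff ℝ 1 (dirDeriv v η) := contDiff_dirDeriv hη le_rfl v
  have hc' (v : Euc N) : HasCompactSupport (dirDeriv v η) := hasCompactSupport_dirDeriv hc v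
  simp only [lapl_eq_sum_dirDeriv, dirDeriv_heatPot (hη.of_le one_le_two) hc,
    dirDeriv_heatPot (hη' _) (hc' _)]
  simp only [heatPot_eq_integral, lapl_eq_sum_dirDeriv, Finset.mul_sum]
  exact (integral_finsetSum _ fun i _ => integrable_heatKernel_sub_mul
    (continuous_dirDeriv_dirDeriv hη _) (hasCompactSupport_dirDeriv (hc' _) _) x t).symm

theorem heatPot_dirDeriv (hη : ContDiff ℝ 1 η) (hc : HasCompactSupport η) (v x : Euc N) (t : ℝ) :
    heatPot N (dirDeriv v η) x t = ∫ y, dirDeriv v (heatKernel t) (x - y) * η y := by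
  have kernel := (contDiff_heatKernel (N := N) t).of_le one_le_two
  rw [heatPot_eq_integral, integral_mul_dirDeriv_eq_neg (by fun_prop) hη hc,
    dirDeriv_comp_sub_left (kernel.differentiable one_ne_zero)]
  simp only [neg_mul, integral_neg, neg_neg]

theorem heatPot_lapl (hη : ContDiff ℝ 2 η) (hc : HasCompactSupport η) (x : Euc N) (t : ℝ) :
    heatPot N (lapl η) x t = ∫ y, lapl (heatKernel t) (x - y) * η y := by
  have kernel := contDiff_heatKernel (N := N) t
  rw [heatPot_eq_integral, integral_mul_lapl_eq (by fun_prop) hη hc]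
  simp only [lapl_comp_sub_left kernel]

theorem hasDerivAt_integral_mul_of_hasCompactSupport {E : Type*} [NormedAddCommGroup E]
    [MeasurableSpace E] [BorelSpace E] {μ : Measure E} [IsFiniteMeasureOnCompacts μ] {η : E → ℝ}
    (hη : Continuous η) (hc : HasCompactSupport η) {k k' : E → ℝ → ℝ} {U : Set ℝ} (hU : IsOpen U)
    (hk : ∀ τ ∈ U, Continuous fun y => k y τ)
    (hk' : ContinuousOn (fun p : E × ℝ => k' p.1 p.2) (univ ×ˢ U))
    (hd : ∀ τ ∈ U, ∀ y, HasDerivAt (k y) (k' y τ) τ) {s : ℝ} (hs : s ∈ U) :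
    HasDerivAt (fun τ => ∫ y, k y τ * η y ∂μ) (∫ y, k' y s * η y ∂μ) s := by
  obtain ⟨I, hI, hIU, hIc⟩ := local_compact_nhds (hU.mem_nhds hs)
  obtain ⟨M, hM⟩ := (hc.isCompact.prod hIc).exists_bound_of_continuousOn
    (hk'.mono (prod_mono (subset_univ _) hIU))
  have hk's : Continuous fun y => k' y s :=
    hk'.comp_continuous (f := fun y => (y, s)) (by fun_prop) fun y => ⟨mem_univ y, hs⟩
  refine (hasDerivAt_integral_of_dominated_loc_of_deriv_le (F' := fun τ y => k' y τ * η y)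
    (bound := fun y => M * ‖η y‖) hI ?_ ?_ ?_ ?_ ?_ ?_).2
  · filter_upwards [hI] with τ hτ
    exact ((hk τ (hIU hτ)).mul hη).integrable_of_hasCompactSupport hc.mul_left |>.1
  · exact ((hk s hs).mul hη).integrable_of_hasCompactSupport hc.mul_left
  · exact ((hk's.mul hη).integrable_of_hasCompactSupport hc.mul_left).1
  · refine .of_forall fun y τ hτ => ?_
    rw [norm_mul]
    by_cases hy : y ∈ tsupport η
    · exact mul_le_mul_of_nonneg_right (hM (y, τ) ⟨hy, hτ⟩) (norm_nonneg _)
    · rw [image_eq_zero_of_notMem_tsupport hy, norm_zero, mul_zero, mul_zero]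
  · exact (hη.integrable_of_hasCompactSupport hc).norm.const_mul M
  · exact .of_forall fun y τ hτ => (hd τ (hIU hτ) y).mul_const _

theorem hasDerivAt_heatPot (hη : ContDiff ℝ 2 η) (hc : HasCompactSupport η) (ht : 0 < t)
    (x : Euc N) : HasDerivAt (heatPot N η x) (lapl (fun y => heatPot N η y t) x) t := by
  rw [lapl_heatPot hη hc, heatPot_lapl hη hc]
  refine hasDerivAt_integral_mul_of_hasCompactSupport (U := Ioi 0)
    (k := fun y τ => heatKernel τ (x - y)) (k' := fun y τ => lapl (heatKernel τ) (x - y))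
    hη.continuous hc isOpen_Ioi (fun τ _ => ?_) ?_ (fun τ hτ y => hasDerivAt_heatKernel hτ _) ht
  · have := (contDiff_heatKernel (N := N) τ).continuous
    fun_prop
  · have kernel : ContinuousOn (fun p : Euc N × ℝ => heatKernel p.2 (x - p.1)) (univ ×ˢ Ioi 0) :=
      contDiffOn_heatKernel.continuousOn.comp (f := fun p : Euc N × ℝ => (x - p.1, p.2))
        (by fun_prop) fun p hp => ⟨mem_univ _, hp.2⟩
    simp only [lapl_heatKernel]
    refine ContinuousOn.mul (.sub (.div (by fun_prop) (by fun_prop) ?_)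
      (.div (by fun_prop) (by fun_prop) ?_)) kernel <;>
    · rintro ⟨y, τ⟩ ⟨-, hτ : 0 < τ⟩
      positivity

end HeatPotential

theorem contDiffOn_heatPot {N : ℕ} {η : Euc N → ℝ} (hη : ContDiff ℝ 2 η)
    (hc : HasCompactSupport η) :
    ContDiffOn ℝ 2 (fun p : Euc N × ℝ => heatPot N η p.1 p.2) (univ ×ˢ Ioi 0) := by
  have kernel : ContDiffOn ℝ 2 (fun w : (Euc N × ℝ) × Euc N => heatKernel w.1.2 (w.1.1 + w.2))
      ((univ ×ˢ Ioi 0) ×ˢ univ) :=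
    contDiffOn_heatKernel.comp (f := fun w : (Euc N × ℝ) × Euc N => (w.1.1 + w.2, w.1.2))
      (by fun_prop) fun w hw => ⟨mem_univ _, hw.1.2⟩
  have reflected : ContDiffOn ℝ 2 (fun w : (Euc N × ℝ) × Euc N => η (-w.2))
      ((univ ×ˢ Ioi 0) ×ˢ univ) := by fun_prop
  have smooth := contDiffOn_convolution_right_with_param_comp (𝕜 := ℝ) (μ := volume) (n := 2)
    (.mul ℝ ℝ) (v := fun _ : Euc N × ℝ => (0 : Euc N)) (f := fun _ => (1 : ℝ))
    (g := fun p z => heatKernel p.2 (p.1 + z) * η (-z)) (s := univ ×ˢ Ioi 0)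
    contDiffOn_const (isOpen_univ.prod isOpen_Ioi) hc.isCompact.neg
    (fun p z _ hz => by rw [image_eq_zero_of_notMem_tsupport (f := η) hz, mul_zero])
    (locallyIntegrable_const 1) (kernel.mul reflected)
  refine smooth.congr fun p _ => ?_
  simp [convolution_mul, heatPot_eq_integral, sub_eq_add_neg]

section Remainder

variable {N : ℕ} {η : Euc N → ℝ} {t : ℝ}

/-- The density `R[η] = |∇ℍ[η]|² + |∂ₜℍ[η]|` whose `L^{q'}` norm controls the solutions. -/
def remainder (η : Euc N → ℝ) (x : Euc N) (t : ℝ) : ℝ :=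
  ‖fderiv ℝ (fun y => heatPot N η y t) x‖ ^ 2 + |deriv (heatPot N η x) t|

theorem remainder_nonneg (η : Euc N → ℝ) (x : Euc N) (t : ℝ) : 0 ≤ remainder η x t := by
  unfold remainder; positivity

theorem continuousOn_remainder (hη : ContDiff ℝ 2 η) (hc : HasCompactSupport η) :
    ContinuousOn (fun z : Euc N × ℝ => remainder η z.1 z.2) (univ ×ˢ Ioi 0) :=
  have smooth := (contDiffOn_heatPot hη hc).of_le one_le_two
  (continuousOn_norm_sq_fderiv_slice smooth).add (continuousOn_deriv_slice smooth).abs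

theorem deriv_heatPot (hη : ContDiff ℝ 2 η) (hc : HasCompactSupport η) (ht : 0 < t) (x : Euc N) :
    deriv (heatPot N η x) t = heatPot N (lapl η) x t := by
  rw [(hasDerivAt_heatPot hη hc ht x).deriv, lapl_heatPot hη hc]

theorem norm_fderiv_heatPot_le_of_forall {M : ℝ} (hη : ContDiff ℝ 1 η) (hc : HasCompactSupport η)
    (hM : 0 ≤ M) (x : Euc N) (h : ∀ v, |heatPot N (dirDeriv v η) x t| ≤ M * ‖v‖) :
    ‖fderiv ℝ (fun y => heatPot N η y t) x‖ ≤ M :=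
  ContinuousLinearMap.opNorm_le_bound _ hM fun v => by
    have := congr_fun (dirDeriv_heatPot hη hc v t) x
    rw [norm_eq_abs, show fderiv ℝ (fun y => heatPot N η y t) x v = _ from this]
    exact h v

theorem norm_fderiv_heatPot_le (hη : ContDiff ℝ 1 η) (hc : HasCompactSupport η) (ht : 0 < t)
    (x : Euc N) :
    ‖fderiv ℝ (fun y => heatPot N η y t) x‖ ≤ heatPot N (fun y => ‖fderiv ℝ η y‖) x t := by
  refine norm_fderiv_heatPot_le_of_forall hη hc (heatPot_nonneg (fun _ => norm_nonneg _) ht x) x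
    fun v => ?_
  have := (hη.continuous_fderiv one_ne_zero).norm
  rw [mul_comm, ← heatPot_const_mul]
  exact abs_heatPot_le (by fun_prop) (hc.fderiv ℝ).norm.mul_left
    (fun y => (abs_dirDeriv_le v η y).trans_eq (mul_comm _ _)) ht x

theorem abs_integral_mul_le_heatPot {k : Euc N → ℝ} {c : ℝ} (hη : Continuous η)
    (hc : HasCompactSupport η) (hη₀ : ∀ y, 0 ≤ η y) (hk : ∀ z, |k z| ≤ c * heatKernel t z)
    (x : Euc N) : |∫ y, k (x - y) * η y| ≤ c * heatPot N η x t := by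
  rw [heatPot_eq_integral, ← integral_const_mul]
  refine norm_integral_le_of_norm_le (f := fun y => k (x - y) * η y)
    ((integrable_heatKernel_sub_mul hη hc x t).const_mul c) (.of_forall fun y => ?_)
  rw [norm_mul, norm_of_nonneg (hη₀ y), ← mul_assoc]
  exact mul_le_mul_of_nonneg_right (hk _) (hη₀ y)

theorem abs_dirDeriv_heatKernel_le (ht : 0 < t) (v z : Euc N) :
    |dirDeriv v (heatKernel t) z| ≤
      3 * 2 ^ ((N : ℝ) / 2) / √t * ‖v‖ * heatKernel (2 * t) z := by
  have := sqrt_pos.2 ht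
  have := heatKernel_pos (mul_pos two_pos ht) z
  rw [dirDeriv_heatKernel, abs_mul, abs_neg, abs_div, abs_of_pos (heatKernel_pos ht z),
    abs_of_pos (mul_pos two_pos ht)]
  calc |inner ℝ z v| / (2 * t) * heatKernel t z
      ≤ ‖z‖ * ‖v‖ / (2 * t) * heatKernel t z := by
        have := (heatKernel_pos ht z).le
        gcongr
        exact abs_real_inner_le_norm z v
    _ = ‖v‖ / (2 * t) * (‖z‖ * heatKernel t z) := by ring
    _ ≤ ‖v‖ / (2 * t) * (6 * √t * (2 ^ ((N : ℝ) / 2) * heatKernel (2 * t) z)) :=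
        mul_le_mul_of_nonneg_left (norm_mul_heatKernel_le ht z) (by positivity)
    _ = 3 * 2 ^ ((N : ℝ) / 2) / √t * ‖v‖ * heatKernel (2 * t) z := by
        rw [show 2 * t = 2 * (√t * √t) by rw [mul_self_sqrt ht.le]]
        field_simp
        ring

theorem abs_lapl_heatKernel_le (ht : 0 < t) (z : Euc N) :
    |lapl (heatKernel t) z| ≤ (2 + N / 2) * 2 ^ ((N : ℝ) / 2) / t * heatKernel (2 * t) z := by
  have k_pos := heatKernel_pos ht z
  have quadratic := norm_sq_mul_heatKernel_le ht z
  have constant := heatKernel_le_heatKernel_two_mul ht z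
  rw [lapl_heatKernel, abs_mul, abs_of_pos k_pos]
  set k₂ := 2 ^ ((N : ℝ) / 2) * heatKernel (2 * t) z with k₂_def
  calc |‖z‖ ^ 2 / (4 * t ^ 2) - N / (2 * t)| * heatKernel t z
      ≤ (‖z‖ ^ 2 / (4 * t ^ 2) + N / (2 * t)) * heatKernel t z := by
        gcongr
        refine (abs_sub _ _).trans_eq ?_
        rw [abs_of_nonneg (by positivity), abs_of_nonneg (by positivity)]
    _ = ‖z‖ ^ 2 * heatKernel t z / (4 * t ^ 2) + N / (2 * t) * heatKernel t z := by ring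
    _ ≤ 8 * t * k₂ / (4 * t ^ 2) + N / (2 * t) * k₂ := by gcongr
    _ = (2 + N / 2) / t * k₂ := by field_simp; ring
    _ = (2 + N / 2) * 2 ^ ((N : ℝ) / 2) / t * heatKernel (2 * t) z := by rw [k₂_def]; ring

theorem norm_fderiv_heatPot_le_div_sqrt (hη : ContDiff ℝ 1 η) (hc : HasCompactSupport η)
    (hη₀ : ∀ y, 0 ≤ η y) (ht : 0 < t) (x : Euc N) :
    ‖fderiv ℝ (fun y => heatPot N η y t) x‖ ≤
      3 * 2 ^ ((N : ℝ) / 2) / √t * heatPot N η x (2 * t) := by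
  have nonneg := heatPot_nonneg hη₀ (mul_pos two_pos ht) x
  refine norm_fderiv_heatPot_le_of_forall hη hc (by positivity) x fun v => ?_
  rw [heatPot_dirDeriv hη hc]
  exact (abs_integral_mul_le_heatPot hη.continuous hc hη₀
    (abs_dirDeriv_heatKernel_le ht v) x).trans_eq (mul_right_comm _ _ _)

theorem abs_deriv_heatPot_le_div (hη : ContDiff ℝ 2 η) (hc : HasCompactSupport η)
    (hη₀ : ∀ y, 0 ≤ η y) (ht : 0 < t) (x : Euc N) :
    |deriv (heatPot N η x) t| ≤ (2 + N / 2) * 2 ^ ((N : ℝ) / 2) / t * heatPot N η x (2 * t) := by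
  rw [deriv_heatPot hη hc ht, heatPot_lapl hη hc]
  exact abs_integral_mul_le_heatPot hη.continuous hc hη₀ (abs_lapl_heatKernel_le ht) x

end Remainder

/-- A cutoff function in the sense needed for testing the equation: a compactly supported `C²`
function with values in `[0, 1]`. -/
structure IsCutoff {N : ℕ} (η : Euc N → ℝ) : Prop where
  contDiff : ContDiff ℝ 2 η
  hasCompactSupport : HasCompactSupport η
  nonneg (x : Euc N) : 0 ≤ η x
  le_one (x : Euc N) : η x ≤ 1

theorem TestFun.isCutoff {N : ℕ} {r ρ : ℝ} {K : Set (Euc N)} {η : Euc N → ℝ}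
    (hη : TestFun N r ρ K η) : IsCutoff η where
  contDiff := contDiff_infty.1 hη.1 2
  hasCompactSupport := hη.2.1
  nonneg x := (hη.2.2.2.1 x).1
  le_one x := (hη.2.2.2.1 x).2

section Integrability

variable {N : ℕ} {η g : Euc N → ℝ} {c p s t : ℝ}

theorem rpow_le_rpow_mul_of_le_mul {a b : ℝ} (ha : 0 ≤ a) (hc : 0 ≤ c) (hb : 0 ≤ b) (hb₁ : b ≤ 1)
    (hp : 1 ≤ p) (h : a ≤ c * b) : a ^ p ≤ c ^ p * b :=
  calc a ^ p ≤ (c * b) ^ p := rpow_le_rpow ha h (by positivity)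
    _ = c ^ p * b ^ p := mul_rpow hc hb
    _ ≤ c ^ p * b ^ (1 : ℝ) := by
        gcongr 1
        exact rpow_le_rpow_of_exponent_ge' hb hb₁ zero_le_one hp
    _ = c ^ p * b := by rw [rpow_one]

theorem IsCutoff.remainder_le_div (hη : IsCutoff η) (ht : 0 < t) (x : Euc N) :
    remainder η x t ≤ ((3 * 2 ^ ((N : ℝ) / 2)) ^ 2 + (2 + N / 2) * 2 ^ ((N : ℝ) / 2)) / t *
      heatPot N η x (2 * t) := by
  obtain ⟨smooth, hc, hη₀, hη₁⟩ := hη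
  have nonneg := heatPot_nonneg hη₀ (mul_pos two_pos ht) x
  have le_one := heatPot_le smooth.continuous hc hη₁ (mul_pos two_pos ht) x
  have gradient := norm_fderiv_heatPot_le_div_sqrt (smooth.of_le one_le_two) hc hη₀ ht x
  have time := abs_deriv_heatPot_le_div smooth hc hη₀ ht x
  set H := heatPot N η x (2 * t)
  have square : ‖fderiv ℝ (fun y => heatPot N η y t) x‖ ^ 2 ≤
      (3 * 2 ^ ((N : ℝ) / 2)) ^ 2 / t * H :=
    calc _ ≤ (3 * 2 ^ ((N : ℝ) / 2) / √t * H) ^ 2 := by gcongr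
      _ = (3 * 2 ^ ((N : ℝ) / 2)) ^ 2 / t * (H * H) := by rw [mul_pow, div_pow, sq_sqrt ht.le, sq H]
      _ ≤ (3 * 2 ^ ((N : ℝ) / 2)) ^ 2 / t * (1 * H) := by gcongr
      _ = _ := by rw [one_mul]
  exact (add_le_add square time).trans_eq (by ring)

theorem IsCutoff.exists_remainder_le_mul_heatPot (hη : IsCutoff η) :
    ∃ c > 0, ∃ g : Euc N → ℝ, Continuous g ∧ HasCompactSupport g ∧ (∀ y, 0 ≤ g y) ∧
      (∀ y, g y ≤ 1) ∧ ∀ x t, 0 < t → remainder η x t ≤ c * heatPot N g x t := by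
  obtain ⟨smooth, hc, -, -⟩ := hη
  have smooth₁ := smooth.of_le one_le_two
  have gradient_cont := (smooth₁.continuous_fderiv one_ne_zero).norm
  have lapl_cont := (continuous_lapl smooth).abs
  have lapl_supp : HasCompactSupport fun y => |lapl η y| := (hasCompactSupport_lapl hc).norm
  have grad_supp : HasCompactSupport fun y => ‖fderiv ℝ η y‖ := (hc.fderiv ℝ).norm
  obtain ⟨A, hA⟩ := grad_supp.exists_bound_of_continuous gradient_cont
  obtain ⟨B, hB⟩ := lapl_supp.exists_bound_of_continuous lapl_cont
  simp only [norm_norm] at hA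
  simp only [norm_eq_abs, abs_abs] at hB
  have A_nonneg : 0 ≤ A := (norm_nonneg _).trans (hA 0)
  have B_nonneg : 0 ≤ B := (abs_nonneg _).trans (hB 0)
  refine ⟨A * A + B + 1, by positivity,
    fun y => (A * A + B + 1)⁻¹ * (A * ‖fderiv ℝ η y‖ + |lapl η y|), by fun_prop,
    (grad_supp.mul_left.add lapl_supp).mul_left, fun y => by positivity, fun y => ?_,
    fun x t ht => ?_⟩
  · rw [inv_mul_le_one₀ (by positivity)]
    nlinarith [hA y, hB y]
  · rw [heatPot_const_mul, heatPot_add (η := fun y => A * ‖fderiv ℝ η y‖) (by fun_prop)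
      grad_supp.mul_left lapl_cont lapl_supp, heatPot_const_mul,
      mul_inv_cancel_left₀ (by positivity), remainder, deriv_heatPot smooth hc ht, sq]
    have grad_le := norm_fderiv_heatPot_le smooth₁ hc ht x
    gcongr
    · exact grad_le.trans (heatPot_le gradient_cont grad_supp hA ht x)
    · exact abs_heatPot_le lapl_cont lapl_supp (fun _ => le_rfl) ht x

theorem IsCutoff.continuousOn_remainder_rpow (hη : IsCutoff η) (hp : 0 ≤ p) :
    ContinuousOn (fun z : Euc N × ℝ => remainder η z.1 z.2 ^ p) (univ ×ˢ Ioi 0) :=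
  (continuousOn_remainder hη.contDiff hη.hasCompactSupport).rpow_const fun _ _ => .inr hp

theorem IsCutoff.integrable_remainder_rpow_slice (hη : IsCutoff η) (hg : Continuous g)
    (hgc : HasCompactSupport g) (hg₀ : ∀ y, 0 ≤ g y) (hg₁ : ∀ y, g y ≤ 1) (hs : 0 < s)
    (ht : 0 < t) (hc : 0 ≤ c) (hp : 1 ≤ p) (h : ∀ x, remainder η x t ≤ c * heatPot N g x s) :
    Integrable (fun x => remainder η x t ^ p) ∧
      ∫ x, remainder η x t ^ p ≤ c ^ p * ∫ x, g x := by
  have integrable_g := hg.integrable_of_hasCompactSupport hgc (μ := volume)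
  have bound (x : Euc N) : remainder η x t ^ p ≤ c ^ p * heatPot N g x s :=
    rpow_le_rpow_mul_of_le_mul (remainder_nonneg η x t) hc (heatPot_nonneg hg₀ hs x)
      (heatPot_le hg hgc hg₁ hs x) hp (h x)
  have integrable_bound := (integrable_heatPot integrable_g hs).const_mul (c ^ p)
  have cont : Continuous fun x => remainder η x t ^ p :=
    (hη.continuousOn_remainder_rpow (zero_le_one.trans hp)).comp_continuous
      (f := fun x => (x, t)) (by fun_prop) fun x => ⟨mem_univ x, ht⟩
  have integrable : Integrable fun x => remainder η x t ^ p :=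
    integrable_bound.mono' cont.aestronglyMeasurable (.of_forall fun x =>
      (norm_of_nonneg (rpow_nonneg (remainder_nonneg η x t) p)).trans_le (bound x))
  refine ⟨integrable, (integral_mono integrable integrable_bound bound).trans_eq ?_⟩
  rw [integral_const_mul, integral_heatPot integrable_g hs]

theorem volume_restrict_univ_prod {X : Type*} [MeasureSpace X] [SFinite (volume : Measure X)]
    (s : Set ℝ) :
    (volume : Measure (X × ℝ)).restrict (univ ×ˢ s) = volume.prod (volume.restrict s) := by
  rw [Measure.volume_eq_prod, ← Measure.prod_restrict, Measure.restrict_univ]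

theorem integrableOn_Ioi_of_le_const_of_le_rpow {f : ℝ → ℝ} {A B : ℝ} (hp : 1 < p)
    (hf : AEStronglyMeasurable f (volume.restrict (Ioi 0))) (nonneg : ∀ t, 0 < t → 0 ≤ f t)
    (le_const : ∀ t, 0 < t → f t ≤ A) (le_rpow : ∀ t, 0 < t → f t ≤ B * t ^ (-p)) :
    IntegrableOn f (Ioi 0) := by
  rw [← Ioc_union_Ioi_eq_Ioi zero_le_one] at hf ⊢
  refine IntegrableOn.union ?_ ?_
  · refine Integrable.mono' (integrableOn_const (C := A) measure_Ioc_lt_top.ne)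
      (hf.mono_set subset_union_left) ?_
    exact (ae_restrict_iff' measurableSet_Ioc).2 (.of_forall fun t ht =>
      (norm_of_nonneg (nonneg t ht.1)).trans_le (le_const t ht.1))
  · refine Integrable.mono' ((integrableOn_Ioi_rpow_of_lt (neg_lt_neg hp) one_pos).const_mul B)
      (hf.mono_set subset_union_right) ?_
    exact (ae_restrict_iff' measurableSet_Ioi).2 (.of_forall fun t ht =>
      have pos := one_pos.trans (mem_Ioi.1 ht)
      (norm_of_nonneg (nonneg t pos)).trans_le (le_rpow t pos))

theorem IsCutoff.integrableOn_remainder_rpow (hη : IsCutoff η) (hp : 1 < p) :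
    IntegrableOn (fun z : Euc N × ℝ => remainder η z.1 z.2 ^ p) (univ ×ˢ Ioi 0) := by
  obtain ⟨c, hc, g, hg, hgc, hg₀, hg₁, early⟩ := hη.exists_remainder_le_mul_heatPot
  set C : ℝ := (3 * 2 ^ ((N : ℝ) / 2)) ^ 2 + (2 + N / 2) * 2 ^ ((N : ℝ) / 2)
  have hC : 0 ≤ C := by positivity
  have early_slice {t : ℝ} (ht : 0 < t) := hη.integrable_remainder_rpow_slice hg hgc hg₀ hg₁ ht ht
    hc.le hp.le fun x => early x t ht
  have late_slice {t : ℝ} (ht : 0 < t) := hη.integrable_remainder_rpow_slice hη.contDiff.continuous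
    hη.hasCompactSupport hη.nonneg hη.le_one (mul_pos two_pos ht) ht (div_nonneg hC ht.le) hp.le
    fun x => hη.remainder_le_div ht x
  have meas : AEStronglyMeasurable (fun z : Euc N × ℝ => remainder η z.1 z.2 ^ p)
      (volume.prod (volume.restrict (Ioi 0))) := by
    rw [← volume_restrict_univ_prod]
    exact (hη.continuousOn_remainder_rpow (by positivity)).aestronglyMeasurable
      (MeasurableSet.univ.prod measurableSet_Ioi)
  rw [IntegrableOn, volume_restrict_univ_prod, integrable_prod_iff' meas]
  refine ⟨(ae_restrict_iff' measurableSet_Ioi).2 (.of_forall fun t ht => (early_slice ht).1), ?_⟩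
  have norm_slice (t : ℝ) : ∫ x, ‖remainder η x t ^ p‖ = ∫ x, remainder η x t ^ p :=
    integral_congr_ae (.of_forall fun x =>
      norm_of_nonneg (rpow_nonneg (remainder_nonneg η x t) p))
  have meas_slices := meas.norm.prod_swap.integral_prod_right'
  simp only [norm_slice, Prod.swap] at meas_slices ⊢
  refine integrableOn_Ioi_of_le_const_of_le_rpow hp meas_slices
    (fun t _ => integral_nonneg fun x => rpow_nonneg (remainder_nonneg η x t) p)
    (fun t ht => (early_slice ht).2) (B := C ^ p * ∫ x, η x)
    fun t ht => (late_slice ht).2.trans_eq ?_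
  rw [div_rpow hC ht.le, rpow_neg ht.le]
  ring

theorem IsCutoff.setIntegral_remainder_rpow_eq_Rnorm {q : ℝ} (hη : IsCutoff η) (hq : 1 < q) :
    ∫ z in (univ : Set (Euc N)) ×ˢ Ioi (0 : ℝ), remainder η z.1 z.2 ^ q.conjExponent =
      Rnorm N q η := by
  have integrable := hη.integrableOn_remainder_rpow (Real.HolderConjugate.conjExponent hq).symm.lt
  rw [IntegrableOn, volume_restrict_univ_prod] at integrable
  rw [volume_restrict_univ_prod, integral_prod_symm _ integrable]
  rfl

end Integrability

section Gap

variable {N : ℕ} {η : Euc N → ℝ} {t : ℝ}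

theorem exists_norm_sub_eq_norm_eq_add {E : Type*} [NormedAddCommGroup E] [NormedSpace ℝ E]
    [Nontrivial E] (x : E) {d : ℝ} (hd : 0 ≤ d) : ∃ z : E, ‖x - z‖ = d ∧ ‖z‖ = ‖x‖ + d := by
  obtain ⟨e, he, ray⟩ : ∃ e : E, ‖e‖ = 1 ∧ x = ‖x‖ • e := by
    rcases eq_or_ne x 0 with rfl | hx
    · obtain ⟨e, he⟩ := exists_norm_eq E zero_le_one
      exact ⟨e, he, by simp⟩
    · exact ⟨‖x‖⁻¹ • x, norm_smul_inv_norm hx, (smul_inv_smul₀ (norm_ne_zero_iff.2 hx) x).symm⟩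
  refine ⟨(‖x‖ + d) • e, ?_, ?_⟩
  · rw [add_smul, ← ray, sub_add_cancel_left, norm_neg, norm_smul, he, norm_of_nonneg hd, mul_one]
  · rw [norm_smul, he, norm_of_nonneg (by positivity), mul_one]

theorem le_heatKernel_of_norm_le (ht : 0 < t) {z : Euc N} (hz : ‖z‖ ≤ 3 * √t) :
    (4 * π * t) ^ (-(N : ℝ) / 2) * rexp (-(9 / 4)) ≤ heatKernel t z := by
  refine mul_le_mul_of_nonneg_left (exp_le_exp.2 ?_) (by positivity)
  rw [neg_div, neg_le_neg_iff, div_le_iff₀ (by positivity)]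
  calc ‖z‖ ^ 2 ≤ (3 * √t) ^ 2 := by gcongr
    _ = 9 / 4 * (4 * t) := by rw [mul_pow, sq_sqrt ht.le]; ring

/-- A lower bound for the mass that `heatKernel t` puts on a ball of radius `√t` at distance
`2√t`. -/
def massBound (N : ℕ) : ℝ :=
  (4 * π) ^ (-(N : ℝ) / 2) * rexp (-(9 / 4)) * volume.real (ball (0 : Euc N) 1)

theorem massBound_pos (N : ℕ) : 0 < massBound N := by
  have : 0 < volume.real (ball (0 : Euc N) 1) :=
    ENNReal.toReal_pos (measure_ball_pos volume 0 one_pos).ne' measure_ball_lt_top.ne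
  unfold massBound
  positivity

theorem massBound_le_setIntegral_heatKernel (ht : 0 < t) {x z : Euc N} (hz : ‖x - z‖ = 2 * √t) :
    massBound N ≤ ∫ y in ball z √t, heatKernel t (x - y) := by
  have scaling : massBound N =
      volume.real (ball z √t) * ((4 * π * t) ^ (-(N : ℝ) / 2) * rexp (-(9 / 4))) := by
    rw [Measure.real, Measure.addHaar_ball_of_pos volume z (sqrt_pos.2 ht), ENNReal.toReal_mul,
      ENNReal.toReal_ofReal (by positivity), finrank_euclideanSpace, Fintype.card_fin,
      ← Measure.real, mul_rpow (by positivity) ht.le, ← rpow_natCast, sqrt_eq_rpow,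
      ← rpow_mul ht.le, massBound, show -(N : ℝ) / 2 = -(1 / 2 * N) by ring, rpow_neg ht.le]
    field_simp
  rw [scaling, ← smul_eq_mul, ← setIntegral_const]
  refine setIntegral_mono_on (integrableOn_const measure_ball_lt_top.ne)
    (integrable_heatKernel_sub ht x).integrableOn measurableSet_ball fun y hy => ?_
  refine le_heatKernel_of_norm_le ht ?_
  have hy : ‖z - y‖ < √t := by rwa [← dist_eq_norm, dist_comm]
  calc ‖x - y‖ = ‖(x - z) + (z - y)‖ := by rw [sub_add_sub_cancel]
    _ ≤ 2 * √t + √t := (norm_add_le _ _).trans (by gcongr; exact hz.le)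
    _ = 3 * √t := by ring

theorem IsCutoff.one_sub_heatPot_eq (hη : IsCutoff η) (ht : 0 < t) (x : Euc N) :
    1 - heatPot N η x t = ∫ y, heatKernel t (x - y) * (1 - η y) := by
  simp only [mul_sub, mul_one]
  rw [integral_sub (integrable_heatKernel_sub ht x) (integrable_heatKernel_sub_mul
    hη.contDiff.continuous hη.hasCompactSupport x t), integral_heatKernel_sub ht,
    heatPot_eq_integral]

theorem IsCutoff.massBound_le_one_sub_heatPot [NeZero N] {R : ℝ} (hη : IsCutoff η)
    (hsupp : tsupport η ⊆ ball 0 R) (ht : 0 < t) {x : Euc N} (hx : R ^ 2 ≤ ‖x‖ ^ 2 + t) :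
    massBound N ≤ 1 - heatPot N η x t := by
  obtain ⟨z, hxz, hz⟩ := exists_norm_sub_eq_norm_eq_add x (by positivity : 0 ≤ 2 * √t)
  have radius : R ≤ ‖x‖ + √t := by
    refine le_of_sq_le_sq ?_ (by positivity)
    nlinarith [sq_sqrt ht.le, mul_nonneg (norm_nonneg x) (sqrt_nonneg t)]
  have vanish : ∀ y ∈ ball z √t, η y = 0 := fun y hy =>
    image_eq_zero_of_notMem_tsupport fun hmem => by
      have hy_norm := mem_ball_zero_iff.1 (hsupp hmem)
      have hy_dist := mem_ball.1 hy
      have := norm_le_norm_add_norm_sub' z y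
      rw [← dist_eq_norm, dist_comm] at this
      linarith
  rw [hη.one_sub_heatPot_eq ht]
  calc massBound N ≤ ∫ y in ball z √t, heatKernel t (x - y) :=
        massBound_le_setIntegral_heatKernel ht hxz
    _ = ∫ y in ball z √t, heatKernel t (x - y) * (1 - η y) :=
        setIntegral_congr_fun measurableSet_ball fun y hy => by rw [vanish y hy, sub_zero, mul_one]
    _ ≤ ∫ y, heatKernel t (x - y) * (1 - η y) := by
        refine setIntegral_le_integral ?_ (.of_forall fun y =>
          mul_nonneg (heatKernel_pos ht _).le (sub_nonneg.2 (hη.le_one y)))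
        simp only [mul_sub, mul_one]
        exact (integrable_heatKernel_sub ht x).sub (integrable_heatKernel_sub_mul
          hη.contDiff.continuous hη.hasCompactSupport x t)

theorem abs_heatPot_sub_le {L : NNReal} (hη : LipschitzWith L η) (hc : HasCompactSupport η)
    (ht : 0 < t) (x : Euc N) :
    |heatPot N η x t - η x| ≤ L * (6 * √t * 2 ^ ((N : ℝ) / 2)) := by
  have difference : heatPot N η x t - η x = ∫ y, heatKernel t (x - y) * (η y - η x) := by
    simp only [mul_sub]
    rw [integral_sub (integrable_heatKernel_sub_mul hη.continuous hc x t)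
      ((integrable_heatKernel_sub ht x).mul_const _), integral_mul_const,
      integral_heatKernel_sub ht, one_mul, heatPot_eq_integral]
  have mass := integral_heatKernel_sub (mul_pos two_pos ht) x
  calc |heatPot N η x t - η x| = ‖∫ y, heatKernel t (x - y) * (η y - η x)‖ := by
        rw [difference, norm_eq_abs]
    _ ≤ ∫ y, L * (6 * √t * 2 ^ ((N : ℝ) / 2)) * heatKernel (2 * t) (x - y) := by
        refine norm_integral_le_of_norm_le
          ((integrable_heatKernel_sub (by positivity) x).const_mul _) (.of_forall fun y => ?_)
        have k_pos := heatKernel_pos ht (x - y)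
        rw [norm_mul, norm_of_nonneg k_pos.le, ← dist_eq_norm, mul_comm]
        calc dist (η y) (η x) * heatKernel t (x - y)
            ≤ L * dist y x * heatKernel t (x - y) := by gcongr; exact hη.dist_le_mul y x
          _ = L * (‖x - y‖ * heatKernel t (x - y)) := by
              rw [dist_comm, dist_eq_norm, mul_assoc]
          _ ≤ L * (6 * √t * (2 ^ ((N : ℝ) / 2) * heatKernel (2 * t) (x - y))) :=
              mul_le_mul_of_nonneg_left (norm_mul_heatKernel_le ht _) L.coe_nonneg
          _ = L * (6 * √t * 2 ^ ((N : ℝ) / 2)) * heatKernel (2 * t) (x - y) := by ring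
    _ = L * (6 * √t * 2 ^ ((N : ℝ) / 2)) := by rw [integral_const_mul, mass, mul_one]

end Gap

section PositivePart

variable {m s : ℝ}

/-- The power `s₊ ^ m` of the positive part, a nonlinearity of class `C²` for `m > 2` that
vanishes on the negative half-line. -/
def posPow (m s : ℝ) : ℝ := max s 0 ^ m

theorem posPow_nonneg (m s : ℝ) : 0 ≤ posPow m s := rpow_nonneg (le_max_right _ _) _

theorem posPow_of_nonpos (hm : 0 < m) (hs : s ≤ 0) : posPow m s = 0 := by
  rw [posPow, max_eq_right hs, zero_rpow hm.ne']

theorem posPow_of_nonneg (hs : 0 ≤ s) : posPow m s = s ^ m := by rw [posPow, max_eq_left hs]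

theorem posPow_le_one (hm : 0 ≤ m) (hs : s ≤ 1) : posPow m s ≤ 1 :=
  rpow_le_one (le_max_right _ _) (max_le hs zero_le_one) hm

theorem posPow_rpow (m p s : ℝ) : posPow m s ^ p = posPow (m * p) s :=
  (rpow_mul (le_max_right _ _) _ _).symm

theorem continuous_posPow (hm : 0 ≤ m) : Continuous (posPow m) :=
  (continuous_id.max continuous_const).rpow_const fun _ => .inr hm

theorem hasDerivAt_posPow (hm : 1 < m) (s : ℝ) :
    HasDerivAt (posPow m) (m * posPow (m - 1) s) s := by
  refine hasDerivAt_of_hasDerivAt_of_ne' (x := 0) (fun y hy => ?_)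
    (continuous_posPow (by positivity)).continuousAt
    ((continuous_posPow (sub_nonneg.2 hm.le)).const_mul m).continuousAt s
  rcases hy.lt_or_gt with neg | pos
  · rw [posPow_of_nonpos (sub_pos.2 hm) neg.le, mul_zero]
    refine (hasDerivAt_const y (0 : ℝ)).congr_of_eventuallyEq ?_
    filter_upwards [Iio_mem_nhds neg] with z hz using
      posPow_of_nonpos (by positivity) (mem_Iio.1 hz).le
  · rw [posPow_of_nonneg pos.le]
    refine (hasDerivAt_rpow_const (.inl pos.ne')).congr_of_eventuallyEq ?_
    filter_upwards [Ioi_mem_nhds pos] with z hz using posPow_of_nonneg (mem_Ioi.1 hz).le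

theorem contDiff_one_posPow (hm : 1 < m) : ContDiff ℝ 1 (posPow m) := by
  refine contDiff_one_iff_deriv.2 ⟨fun s => (hasDerivAt_posPow hm s).differentiableAt, ?_⟩
  rw [funext fun s => (hasDerivAt_posPow hm s).deriv]
  exact (continuous_posPow (sub_nonneg.2 hm.le)).const_mul m

theorem contDiff_two_posPow (hm : 2 < m) : ContDiff ℝ 2 (posPow m) := by
  have hm₁ := one_lt_two.trans hm
  refine contDiff_succ_iff_deriv (n := 1).2
    ⟨fun s => (hasDerivAt_posPow hm₁ s).differentiableAt, by simp, ?_⟩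
  rw [funext fun s => (hasDerivAt_posPow hm₁ s).deriv]
  exact contDiff_const.mul (contDiff_one_posPow (by linarith))

end PositivePart

section Weight

variable {N : ℕ} {ε μ t : ℝ}

theorem dirDeriv_one_add_norm_sq (v : Euc N) :
    dirDeriv v (fun x : Euc N => 1 + ‖x‖ ^ 2) = fun x => 2 * inner ℝ x v := by
  funext x
  rw [dirDeriv_eq_of_hasFDerivAt ((hasStrictFDerivAt_norm_sq x).hasFDerivAt.const_add 1)]
  simp

theorem lapl_one_add_norm_sq (x : Euc N) : lapl (fun y : Euc N => 1 + ‖y‖ ^ 2) x = 2 * N := by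
  have second (v : Euc N) : dirDeriv v (fun y : Euc N => 2 * inner ℝ y v) x = 2 * ‖v‖ ^ 2 := by
    have linear := (((hasFDerivAt_id x).inner ℝ (hasFDerivAt_const v x)).const_mul 2)
    exact (dirDeriv_eq_of_hasFDerivAt linear).trans (by simp)
  simp only [lapl_eq_sum_dirDeriv, dirDeriv_one_add_norm_sq, second]
  simp [mul_comm]

/-- The smooth substitute `√(1 + ‖x‖²)` for `‖x‖`, used as the exponent of the spatial weight. -/
def bracket (x : Euc N) : ℝ := √(1 + ‖x‖ ^ 2)

theorem one_le_bracket (x : Euc N) : 1 ≤ bracket x :=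
  one_le_sqrt.2 (le_add_of_nonneg_right (sq_nonneg _))

theorem norm_le_bracket (x : Euc N) : ‖x‖ ≤ bracket x :=
  le_sqrt_of_sq_le (le_add_of_nonneg_left zero_le_one)

theorem bracket_mul_self (x : Euc N) : bracket x * bracket x = 1 + ‖x‖ ^ 2 :=
  mul_self_sqrt (by positivity)

theorem contDiff_bracket : ContDiff ℝ 2 (bracket : Euc N → ℝ) :=
  (contDiff_const.add (contDiff_id.norm_sq ℝ)).sqrt fun x => by positivity

theorem norm_fderiv_bracket_le (x : Euc N) : ‖fderiv ℝ bracket x‖ ≤ 1 := by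
  have root := ((hasStrictFDerivAt_norm_sq x).hasFDerivAt.const_add 1).sqrt (by positivity)
  have pos := one_pos.trans_le (one_le_bracket x)
  refine ContinuousLinearMap.opNorm_le_bound _ zero_le_one fun v => ?_
  have formula : fderiv ℝ bracket x v = inner ℝ x v / bracket x := by
    rw [show fderiv ℝ bracket x = _ from root.fderiv]
    simp only [smul_apply, innerSL_apply_apply, smul_eq_mul, nsmul_eq_mul, Nat.cast_ofNat]
    rw [← bracket]
    field_simp
  calc ‖fderiv ℝ bracket x v‖ = |inner ℝ x v| / bracket x := by
        rw [formula, norm_eq_abs, abs_div, abs_of_pos pos]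
    _ ≤ bracket x * ‖v‖ / bracket x := by
        gcongr
        exact (abs_real_inner_le_norm x v).trans (by gcongr; exact norm_le_bracket x)
    _ = 1 * ‖v‖ := by rw [mul_div_cancel_left₀ _ pos.ne', one_mul]

theorem neg_one_le_lapl_bracket (x : Euc N) : -1 ≤ lapl bracket x := by
  have square := lapl_mul contDiff_bracket contDiff_bracket x
  simp only [bracket_mul_self, lapl_one_add_norm_sq] at square
  simp only [← sq, sum_sq_dirDeriv] at square
  have gradient : ‖fderiv ℝ bracket x‖ ^ 2 ≤ 1 :=
    pow_le_one₀ (norm_nonneg _) (norm_fderiv_bracket_le x)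
  by_contra! h
  nlinarith [one_le_bracket x, Nat.cast_nonneg (α := ℝ) N]

/-- The space-time weight `exp (-ε √(1 + ‖x‖²) - μ t)`. Its spatial derivatives are at most of
order `ε` times the weight itself, and the damping rate `μ` serves to absorb them. -/
def weight (ε μ : ℝ) (x : Euc N) (t : ℝ) : ℝ := rexp (-(ε * bracket x) - μ * t)

theorem weight_pos (ε μ : ℝ) (x : Euc N) (t : ℝ) : 0 < weight ε μ x t := exp_pos _

theorem weight_le_weight_zero_zero (hμ : 0 ≤ μ) (ht : 0 ≤ t) (x : Euc N) :
    weight ε μ x t ≤ weight ε 0 x 0 :=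
  exp_le_exp.2 (by rw [mul_zero]; exact sub_le_sub_left (mul_nonneg hμ ht) _)

theorem weight_zero_zero_le_one (hε : 0 ≤ ε) (x : Euc N) : weight ε 0 x 0 ≤ 1 := by
  have := one_le_bracket x
  refine exp_le_one_iff.2 ?_
  rw [mul_zero, sub_zero, neg_nonpos]
  positivity

theorem hasDerivAt_weight (ε μ : ℝ) (x : Euc N) (t : ℝ) :
    HasDerivAt (weight ε μ x) (-μ * weight ε μ x t) t := by
  have exponent := ((hasDerivAt_id t).const_mul μ).const_sub (-(ε * bracket x))
  exact exponent.exp.congr_deriv (by simp only [weight, id, mul_one, mul_comm])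

theorem contDiff_weight (ε μ : ℝ) : ContDiff ℝ 2 fun p : Euc N × ℝ => weight ε μ p.1 p.2 :=
  have linear : ContDiff ℝ 2 fun p : Euc N × ℝ => μ * p.2 := by fun_prop
  ((contDiff_const.mul (contDiff_bracket.comp contDiff_fst)).neg.sub linear).exp

theorem contDiff_weight_slice (ε μ t : ℝ) : ContDiff ℝ 2 fun x : Euc N => weight ε μ x t :=
  ((contDiff_const.mul contDiff_bracket).neg.sub contDiff_const).exp

theorem norm_fderiv_weight_le (hε : 0 ≤ ε) (μ : ℝ) (x : Euc N) (t : ℝ) :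
    ‖fderiv ℝ (fun y => weight ε μ y t) x‖ ≤ ε * weight ε μ x t := by
  have exponential := ((((contDiff_bracket.differentiable two_ne_zero x).hasFDerivAt).const_mul
    ε).neg.sub_const (μ * t)).exp
  rw [show fderiv ℝ (fun y => weight ε μ y t) x = _ from exponential.fderiv, norm_smul, norm_neg,
    norm_smul, norm_of_nonneg hε, norm_of_nonneg (exp_pos _).le, mul_comm]
  exact mul_le_mul_of_nonneg_right (mul_le_of_le_one_right hε (norm_fderiv_bracket_le x))
    (exp_pos _).le

theorem lapl_weight_le (hε : 0 ≤ ε) (hε₁ : ε ≤ 1) (μ : ℝ) (x : Euc N) (t : ℝ) :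
    lapl (fun y => weight ε μ y t) x ≤ 2 * ε * weight ε μ x t := by
  have derivative (s : ℝ) : HasDerivAt (fun s => rexp (-(ε * s) - μ * t))
      (-ε * rexp (-(ε * s) - μ * t)) s := by
    simpa [mul_comm] using ((((hasDerivAt_id s).const_mul ε).neg).sub_const (μ * t)).exp
  have chain := lapl_comp (G' := fun s => -ε * rexp (-(ε * s) - μ * t))
    (G'' := fun s => -ε * (-ε * rexp (-(ε * s) - μ * t))) contDiff_bracket
    (fun y => derivative (bracket y)) (fun y => (derivative (bracket y)).const_mul (-ε)) x
  have w_pos := weight_pos ε μ x t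
  have gradient : ‖fderiv ℝ bracket x‖ ^ 2 ≤ 1 :=
    pow_le_one₀ (norm_nonneg _) (norm_fderiv_bracket_le x)
  calc lapl (fun y => weight ε μ y t) x
      = ε * weight ε μ x t * (-lapl bracket x + ε * ‖fderiv ℝ bracket x‖ ^ 2) := by
        rw [show lapl (fun y => weight ε μ y t) x = _ from chain, weight]
        ring
    _ ≤ ε * weight ε μ x t * (1 + 1 * 1) := by
        gcongr
        linarith [neg_one_le_lapl_bracket x]
    _ = 2 * ε * weight ε μ x t := by ring

theorem integrable_weight (hε : 0 < ε) (μ t : ℝ) : Integrable fun x : Euc N => weight ε μ x t := by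
  have polynomial : Integrable fun x : Euc N => (1 + ‖x‖ ^ 2) ^ (-((N + 1 : ℕ) : ℝ) / 2) :=
    integrable_rpow_neg_one_add_norm_sq (by simp)
  refine (polynomial.const_mul (rexp (-(μ * t)) * ((N + 1).factorial / ε ^ (N + 1)))).mono'
    (contDiff_weight_slice ε μ t).continuous.aestronglyMeasurable (.of_forall fun x => ?_)
  have pos := one_pos.trans_le (one_le_bracket x)
  have power : (1 + ‖x‖ ^ 2) ^ (-((N + 1 : ℕ) : ℝ) / 2) = (bracket x ^ (N + 1))⁻¹ := by
    rw [bracket, sqrt_eq_rpow, ← rpow_natCast (_ ^ _), ← rpow_mul (by positivity),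
      ← rpow_neg (by positivity), neg_div, one_div_mul_eq_div]
  have growth := pow_div_factorial_le_exp (ε * bracket x) (by positivity) (N + 1)
  rw [norm_of_nonneg (weight_pos ε μ x t).le, power, weight, sub_eq_add_neg, exp_add, mul_comm,
    mul_assoc, exp_neg (ε * bracket x)]
  refine mul_le_mul_of_nonneg_left ?_ (exp_pos _).le
  calc (rexp (ε * bracket x))⁻¹ ≤ ((ε * bracket x) ^ (N + 1) / (N + 1).factorial)⁻¹ := by gcongr
    _ = (N + 1).factorial / ε ^ (N + 1) * (bracket x ^ (N + 1))⁻¹ := by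
        rw [mul_pow]
        field_simp

theorem weight_zero_zero_le_exp_neg_norm (hε : 0 ≤ ε) (x : Euc N) :
    weight ε 0 x 0 ≤ rexp (-(ε * ‖x‖)) := by
  rw [weight, mul_zero, sub_zero]
  gcongr
  exact norm_le_bracket x

end Weight

/-- The damped complement `θ = (1 - ℍ[η]) ψ` of the heat potential, `ψ` being the weight: small on
`{η = 1}` at small times and bounded below outside the paraboloid. -/
def barrier {N : ℕ} (η : Euc N → ℝ) (ε μ : ℝ) (x : Euc N) (t : ℝ) : ℝ :=
  (1 - heatPot N η x t) * weight ε μ x t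

/-- The test function `(θ - κ)₊ ^ m`. Subtracting the level `κ` makes it compactly supported in
space. The damping `μ = (4m - 1) ε` is exactly what absorbs all derivatives of the weight. -/
def testFn {N : ℕ} (m : ℝ) (η : Euc N → ℝ) (ε κ : ℝ) (x : Euc N) (t : ℝ) : ℝ :=
  posPow m (barrier η ε ((4 * m - 1) * ε) x t - κ)

section Barrier

variable {N : ℕ} {η : Euc N → ℝ} {ε t : ℝ}

theorem IsCutoff.heatPot_mem_Icc (hη : IsCutoff η) (ht : 0 < t) (x : Euc N) :
    heatPot N η x t ∈ Icc 0 1 :=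
  ⟨heatPot_nonneg hη.nonneg ht x,
    heatPot_le hη.contDiff.continuous hη.hasCompactSupport hη.le_one ht x⟩

theorem IsCutoff.barrier_le_weight (hη : IsCutoff η) (ε μ : ℝ) (ht : 0 < t) (x : Euc N) :
    barrier η ε μ x t ≤ weight ε μ x t :=
  mul_le_of_le_one_left (weight_pos ε μ x t).le (sub_le_self _ (hη.heatPot_mem_Icc ht x).1)

theorem IsCutoff.contDiffOn_barrier (hη : IsCutoff η) (ε μ : ℝ) :
    ContDiffOn ℝ 2 (fun p : Euc N × ℝ => barrier η ε μ p.1 p.2) (univ ×ˢ Ioi 0) :=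
  (contDiffOn_const.sub (contDiffOn_heatPot hη.contDiff hη.hasCompactSupport)).mul
    (contDiff_weight ε μ).contDiffOn

theorem lapl_one_sub {f : Euc N → ℝ} (hf : ContDiff ℝ 2 f) (x : Euc N) :
    lapl (fun y => 1 - f y) x = -lapl f x := by
  have chain := lapl_comp (G := fun s => 1 - s) (G' := fun _ => -1) (G'' := fun _ => 0) hf
    (fun y => (hasDerivAt_id (f y)).const_sub 1) (fun y => hasDerivAt_const (f y) (-1)) x
  rw [chain]
  ring

theorem IsCutoff.deriv_add_lapl_barrier_le (hη : IsCutoff η) (hε : 0 ≤ ε) (hε₁ : ε ≤ 1) (μ : ℝ)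
    (ht : 0 < t) (x : Euc N) :
    deriv (barrier η ε μ x) t + lapl (fun y => barrier η ε μ y t) x ≤
      2 * |deriv (heatPot N η x) t| * weight ε μ x t + (2 * ε - μ) * barrier η ε μ x t +
        2 * ε * ‖fderiv ℝ (fun y => heatPot N η y t) x‖ * weight ε μ x t := by
  have potential := contDiff_slice (contDiffOn_heatPot hη.contDiff hη.hasCompactSupport) ht
  have heat := hasDerivAt_heatPot hη.contDiff hη.hasCompactSupport ht x
  have time : deriv (barrier η ε μ x) t = _ :=
    ((heat.const_sub 1).mul (hasDerivAt_weight ε μ x t)).deriv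
  have space := lapl_mul (contDiff_const.sub potential) (contDiff_weight_slice ε μ t) x (f :=
    fun y => 1 - heatPot N η y t)
  have cross : ∑ i, dirDeriv (EuclideanSpace.single i 1) (fun y => 1 - heatPot N η y t) x *
      dirDeriv (EuclideanSpace.single i 1) (fun y => weight ε μ y t) x ≤
      ‖fderiv ℝ (fun y => heatPot N η y t) x‖ * (ε * weight ε μ x t) := by
    refine (le_abs_self _).trans ((abs_sum_dirDeriv_mul_dirDeriv_le _ _ x).trans ?_)
    rw [fderiv_const_sub, norm_neg]
    gcongr
    exact norm_fderiv_weight_le hε μ x t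
  have curvature := mul_le_mul_of_nonneg_left (lapl_weight_le hε hε₁ μ x t)
    (sub_nonneg.2 (hη.heatPot_mem_Icc ht x).2)
  have source := mul_le_mul_of_nonneg_right (neg_le_abs (deriv (heatPot N η x) t))
    (weight_pos ε μ x t).le
  rw [lapl_one_sub potential] at space
  rw [heat.deriv] at source ⊢
  rw [time, show lapl (fun y => barrier η ε μ y t) x = _ from space, barrier]
  linarith

theorem IsCutoff.norm_fderiv_barrier_le (hη : IsCutoff η) (hε : 0 ≤ ε) (μ : ℝ) (ht : 0 < t)
    (x : Euc N) :
    ‖fderiv ℝ (fun y => barrier η ε μ y t) x‖ ≤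
      ε * barrier η ε μ x t + ‖fderiv ℝ (fun y => heatPot N η y t) x‖ * weight ε μ x t := by
  have potential := (contDiff_slice (contDiffOn_heatPot hη.contDiff hη.hasCompactSupport)
    ht).differentiable two_ne_zero x
  have product := (potential.hasFDerivAt.const_sub 1).mul
    ((contDiff_weight_slice ε μ t).differentiable two_ne_zero x).hasFDerivAt
  have gap := sub_nonneg.2 (hη.heatPot_mem_Icc ht x).2
  rw [show fderiv ℝ (fun y => barrier η ε μ y t) x = _ from product.fderiv]
  refine (norm_add_le _ _).trans (add_le_add ?_ ?_)
  · rw [norm_smul, norm_of_nonneg gap, barrier, mul_left_comm]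
    exact mul_le_mul_of_nonneg_left (norm_fderiv_weight_le hε μ x t) gap
  · rw [norm_smul, norm_neg, norm_of_nonneg (weight_pos ε μ x t).le, mul_comm]

end Barrier

section TestFunction

variable {N : ℕ} {η : Euc N → ℝ} {m ε κ t : ℝ}

theorem testFn_nonneg (m : ℝ) (η : Euc N → ℝ) (ε κ : ℝ) (x : Euc N) (t : ℝ) :
    0 ≤ testFn m η ε κ x t :=
  posPow_nonneg _ _

theorem IsCutoff.contDiffOn_testFn (hη : IsCutoff η) (hm : 2 < m) (ε κ : ℝ) :
    ContDiffOn ℝ 2 (fun p : Euc N × ℝ => testFn m η ε κ p.1 p.2) (univ ×ˢ Ioi 0) :=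
  (contDiff_two_posPow hm).comp_contDiffOn ((hη.contDiffOn_barrier ε _).sub contDiffOn_const)

theorem IsCutoff.deriv_add_lapl_testFn_eq (hη : IsCutoff η) (hm : 2 < m) (ε κ : ℝ) (ht : 0 < t)
    (x : Euc N) :
    deriv (testFn m η ε κ x) t + lapl (fun y => testFn m η ε κ y t) x =
      m * posPow (m - 1) (barrier η ε ((4 * m - 1) * ε) x t - κ) *
          (deriv (barrier η ε ((4 * m - 1) * ε) x) t +
            lapl (fun y => barrier η ε ((4 * m - 1) * ε) y t) x) +
        m * (m - 1) * posPow (m - 2) (barrier η ε ((4 * m - 1) * ε) x t - κ) *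
          ‖fderiv ℝ (fun y => barrier η ε ((4 * m - 1) * ε) y t) x‖ ^ 2 := by
  have smooth := hη.contDiffOn_barrier ε ((4 * m - 1) * ε)
  have outer (s : ℝ) : HasDerivAt (fun s => posPow m (s - κ)) (m * posPow (m - 1) (s - κ)) s :=
    (hasDerivAt_posPow (by linarith) (s - κ)).comp_sub_const s κ
  have outer' (s : ℝ) : HasDerivAt (fun s => m * posPow (m - 1) (s - κ))
      (m * ((m - 1) * posPow (m - 2) (s - κ))) s := by
    have := ((hasDerivAt_posPow (m := m - 1) (by linarith) (s - κ)).comp_sub_const s κ).const_mul m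
    exact this.congr_deriv (by rw [show m - 1 - 1 = m - 2 by ring])
  have time := (outer _).comp t (hasDerivAt_slice (smooth.of_le one_le_two) ht x)
  have space := lapl_comp (contDiff_slice smooth ht) (fun y => outer _)
    (G'' := fun s => m * ((m - 1) * posPow (m - 2) (s - κ))) (fun y => outer' _) x
  rw [show deriv (testFn m η ε κ x) t = _ from time.deriv,
    show lapl (fun y => testFn m η ε κ y t) x = _ from space]
  ring

/-- Here `a`, `b` stand for `|∂ₜℍ[η]|` and `‖∇ℍ[η]‖`, `P` for the weight, `L` for `∂ₜθ + Δθ`, and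
`G` for `‖∇θ‖`. -/
theorem sub_mul_add_mul_sq_le {θ P a b L G : ℝ} (hm : 1 ≤ m) (hε : 0 ≤ ε) (hε₁ : ε ≤ 1)
    (hP : 0 ≤ P) (hP₁ : P ≤ 1) (ha : 0 ≤ a) (hκ : 0 ≤ κ) (hθ : κ ≤ θ) (hθ₁ : θ ≤ 1) (hG : 0 ≤ G)
    (hL : L ≤ 2 * a * P + (2 * ε - (4 * m - 1) * ε) * θ + 2 * ε * b * P)
    (hGb : G ≤ ε * θ + b * P) :
    (θ - κ) * L + (m - 1) * G ^ 2 ≤ 2 * m * (b ^ 2 + a + κ ^ 2) := by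
  obtain ⟨w, rfl⟩ : ∃ w, θ = w + κ := ⟨θ - κ, (sub_add_cancel _ _).symm⟩
  have hw : 0 ≤ w := by linarith
  have damping : (w + κ - κ) * L ≤
      2 * a + b ^ 2 + (ε + 2 * ε - (4 * m - 1) * ε) * (w + κ) * w := by
    have source : a * P * w ≤ a := by
      have := mul_le_one₀ hP₁ hw (by linarith)
      nlinarith
    have young : 2 * ε * b * P * w ≤ b ^ 2 + (ε * P * w) ^ 2 := by
      nlinarith [sq_nonneg (b - ε * P * w)]
    have absorbed : (ε * P * w) ^ 2 ≤ ε * (w + κ) * w := by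
      have hεP : ε * P ≤ 1 := mul_le_one₀ hε₁ hP hP₁
      calc (ε * P * w) ^ 2 = ε * P * (ε * P) * (w * w) := by ring
        _ ≤ ε * 1 * 1 * ((w + κ) * w) := by gcongr; linarith
        _ = ε * (w + κ) * w := by ring
    nlinarith [mul_le_mul_of_nonneg_right hL hw]
  have gradient : G ^ 2 ≤ 4 * ε * (w + κ) * w + 2 * κ ^ 2 + 2 * b ^ 2 := by
    have hbP : (b * P) ^ 2 ≤ b ^ 2 := by
      rw [mul_pow]
      exact mul_le_of_le_one_right (sq_nonneg b) (pow_le_one₀ hP hP₁)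
    have square : ε ^ 2 * (w + κ) ^ 2 ≤ ε * (2 * (w + κ) * w) + κ ^ 2 := by
      calc ε ^ 2 * (w + κ) ^ 2 = ε * ε * (2 * (w + κ) * w + κ ^ 2 - w ^ 2) := by ring
        _ ≤ ε * (2 * (w + κ) * w + κ ^ 2 - w ^ 2) := by
          refine mul_le_mul_of_nonneg_right (mul_le_of_le_one_right hε hε₁) ?_
          nlinarith [sq_nonneg (w + κ)]
        _ ≤ ε * (2 * (w + κ) * w) + κ ^ 2 := by
          linarith [mul_nonneg hε (sq_nonneg w), mul_le_of_le_one_left (sq_nonneg κ) hε₁]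
    nlinarith [pow_le_pow_left₀ hG hGb 2, sq_nonneg (ε * (w + κ) - b * P)]
  nlinarith [mul_le_mul_of_nonneg_left gradient (sub_nonneg.2 hm), sq_nonneg κ, sq_nonneg b]

theorem IsCutoff.deriv_add_lapl_testFn_le (hη : IsCutoff η) (hm : 2 < m) (hε : 0 ≤ ε)
    (hε₁ : ε ≤ 1) (hκ : 0 ≤ κ) (ht : 0 < t) (x : Euc N) :
    deriv (testFn m η ε κ x) t + lapl (fun y => testFn m η ε κ y t) x ≤
      2 * m ^ 2 * posPow (m - 2) (barrier η ε ((4 * m - 1) * ε) x t - κ) *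
        (remainder η x t + κ * weight ε 0 x 0) := by
  have hμ : 0 ≤ (4 * m - 1) * ε := mul_nonneg (by linarith) hε
  set μ := (4 * m - 1) * ε with μ_eq
  rw [hη.deriv_add_lapl_testFn_eq hm ε κ ht x, ← μ_eq]
  set θ := barrier η ε μ x t
  rcases le_or_gt θ κ with below | above
  · simp only [posPow_of_nonpos (m := m - 1) (by linarith) (sub_nonpos.2 below),
      posPow_of_nonpos (m := m - 2) (by linarith) (sub_nonpos.2 below)]
    simp
  have hP := weight_le_weight_zero_zero (ε := ε) hμ ht.le x
  have hθ : θ ≤ weight ε μ x t := hη.barrier_le_weight ε μ ht x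
  have level : κ ^ 2 ≤ κ * weight ε 0 x 0 := by
    rw [sq]
    exact mul_le_mul_of_nonneg_left (by linarith) hκ
  have bound := sub_mul_add_mul_sq_le (by linarith) hε hε₁ (weight_pos ε μ x t).le
    (hP.trans (weight_zero_zero_le_one hε x)) (abs_nonneg _) hκ above.le
    (hθ.trans (hP.trans (weight_zero_zero_le_one hε x))) (norm_nonneg _)
    (hη.deriv_add_lapl_barrier_le hε hε₁ μ ht x) (hη.norm_fderiv_barrier_le hε μ ht x)
  have power : posPow (m - 1) (θ - κ) = posPow (m - 2) (θ - κ) * (θ - κ) := by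
    rw [posPow_of_nonneg (by linarith), posPow_of_nonneg (by linarith),
      ← rpow_add_one (by linarith), show m - 2 + 1 = m - 1 by ring]
  calc _ = m * posPow (m - 2) (θ - κ) *
        ((θ - κ) * (deriv (barrier η ε μ x) t + lapl (fun y => barrier η ε μ y t) x) +
          (m - 1) * ‖fderiv ℝ (fun y => barrier η ε μ y t) x‖ ^ 2) := by rw [power]; ring
    _ ≤ m * posPow (m - 2) (θ - κ) * (2 * m * (remainder η x t + κ * weight ε 0 x 0)) := by
        have := posPow_nonneg (m - 2) (θ - κ)
        refine mul_le_mul_of_nonneg_left (bound.trans ?_) (by positivity)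
        exact mul_le_mul_of_nonneg_left (add_le_add_right level _) (by positivity)
    _ = _ := by ring

end TestFunction

section Young

variable {N : ℕ} {η : Euc N → ℝ} {p q ε κ t v : ℝ}

/-- The constant in front of the error terms after Young's inequality. -/
def errorConst (p : ℝ) : ℝ := (16 * p ^ 2) ^ p * 2 ^ (p - 1)

theorem errorConst_nonneg (p : ℝ) : 0 ≤ errorConst p := by
  rw [errorConst]
  positivity

theorem add_rpow_le_two_rpow_mul {a b : ℝ} (ha : 0 ≤ a) (hb : 0 ≤ b) (hp : 1 ≤ p) :
    (a + b) ^ p ≤ 2 ^ (p - 1) * (a ^ p + b ^ p) := by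
  lift a to NNReal using ha
  lift b to NNReal using hb
  exact_mod_cast NNReal.rpow_add_le_mul_rpow_add_rpow a b hp

theorem mul_le_half_rpow_add_rpow {a b : ℝ} (hpq : q.HolderConjugate p) (ha : 0 ≤ a) (hb : 0 ≤ b) :
    a * b ≤ 1 / 2 * a ^ q + (2 * b) ^ p := by
  have half : (1 / 2 : ℝ) ^ q ≤ 1 / 2 :=
    (rpow_le_rpow_of_exponent_ge (by norm_num) (by norm_num) hpq.lt.le).trans_eq (rpow_one _)
  calc a * b = 1 / 2 * a * (2 * b) := by ring
    _ ≤ (1 / 2 * a) ^ q / q + (2 * b) ^ p / p :=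
        young_inequality_of_nonneg (by positivity) (by positivity) hpq
    _ ≤ (1 / 2 * a) ^ q + (2 * b) ^ p := by
        gcongr
        · exact div_le_self (by positivity) hpq.lt.le
        · exact div_le_self (by positivity) hpq.symm.lt.le
    _ = (1 / 2) ^ q * a ^ q + (2 * b) ^ p := by rw [mul_rpow (by norm_num) ha]
    _ ≤ 1 / 2 * a ^ q + (2 * b) ^ p := by gcongr

theorem IsCutoff.mul_deriv_add_lapl_testFn_le (hη : IsCutoff η) (hpq : q.HolderConjugate p)
    (hε : 0 ≤ ε) (hε₁ : ε ≤ 1) (hκ : 0 ≤ κ) (hv : 0 ≤ v) (ht : 0 < t) (x : Euc N) :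
    v * (deriv (testFn (2 * p) η ε κ x) t + lapl (fun y => testFn (2 * p) η ε κ y t) x) ≤
      1 / 2 * (v ^ q * testFn (2 * p) η ε κ x t) +
        errorConst p * (remainder η x t ^ p + κ ^ p * weight ε 0 x 0) := by
  have hp := hpq.symm.lt
  have hW := (weight_pos ε 0 x 0).le
  have hR := remainder_nonneg η x t
  set s := barrier η ε ((4 * (2 * p) - 1) * ε) x t - κ
  have hs := posPow_nonneg (2 * p - 2) s
  have power : posPow (2 * p - 2) s ^ q = testFn (2 * p) η ε κ x t := by
    rw [posPow_rpow, show (2 * p - 2) * q = 2 * ((p - 1) * q) by ring, hpq.symm.sub_one_mul_conj,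
      testFn]
  have error : (remainder η x t + κ * weight ε 0 x 0) ^ p ≤
      2 ^ (p - 1) * (remainder η x t ^ p + κ ^ p * weight ε 0 x 0) := by
    refine (add_rpow_le_two_rpow_mul hR (by positivity) hp.le).trans ?_
    gcongr
    exact rpow_le_rpow_mul_of_le_mul (by positivity) hκ hW (weight_zero_zero_le_one hε x) hp.le
      le_rfl
  calc _ ≤ v * (2 * (2 * p) ^ 2 * posPow (2 * p - 2) s *
          (remainder η x t + κ * weight ε 0 x 0)) := by
        gcongr
        exact hη.deriv_add_lapl_testFn_le (by linarith) hε hε₁ hκ ht x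
    _ = v * posPow (2 * p - 2) s * (8 * p ^ 2 * (remainder η x t + κ * weight ε 0 x 0)) := by ring
    _ ≤ 1 / 2 * (v * posPow (2 * p - 2) s) ^ q +
          (2 * (8 * p ^ 2 * (remainder η x t + κ * weight ε 0 x 0))) ^ p :=
        mul_le_half_rpow_add_rpow hpq (by positivity) (by positivity)
    _ = 1 / 2 * (v ^ q * testFn (2 * p) η ε κ x t) +
          (16 * p ^ 2) ^ p * (remainder η x t + κ * weight ε 0 x 0) ^ p := by
        rw [mul_rpow hv hs, power, ← mul_rpow (by positivity) (by positivity)]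
        ring_nf
    _ ≤ _ := by
        rw [errorConst, mul_assoc ((16 * p ^ 2) ^ p)]
        gcongr

end Young

/-- Nonnegative classical subsolutions of `∂ₜu - Δu + u ^ q = 0` whose initial trace vanishes
outside `F`; the estimate is proved in this generality. -/
structure IsSubsol {N : ℕ} (q : ℝ) (u : Euc N → ℝ → ℝ) (F : Set (Euc N)) : Prop where
  contDiffOn : ContDiffOn ℝ 2 (fun p : Euc N × ℝ => u p.1 p.2) (univ ×ˢ Ioi 0)
  nonneg (x : Euc N) {t : ℝ} (ht : 0 < t) : 0 ≤ u x t
  deriv_sub_lapl_add_rpow_nonpos (x : Euc N) {t : ℝ} (ht : 0 < t) :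
    deriv (u x) t - lapl (fun y => u y t) x + u x t ^ q ≤ 0
  tendsto_sSup {E : Set (Euc N)} (hE : IsCompact E) (hEF : E ⊆ Fᶜ) :
    Tendsto (fun t => sSup ((fun x => u x t) '' E)) (nhdsWithin 0 (Ioi 0)) (nhds 0)

theorem IsSol.isSubsol {N : ℕ} {q : ℝ} {u : Euc N → ℝ → ℝ} {F : Set (Euc N)}
    (hu : IsSol N q u F) : IsSubsol q u F where
  contDiffOn := hu.1
  nonneg x t ht := (hu.2.1 x t ht).le
  deriv_sub_lapl_add_rpow_nonpos x t ht := (hu.2.2.1 x t ht).le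
  tendsto_sSup := hu.2.2.2 _

section Energy

theorem integrableOn_prod_Ioc {X : Type*} [TopologicalSpace X] [MeasureSpace X]
    [OpensMeasurableSpace (X × ℝ)] [IsFiniteMeasureOnCompacts (volume : Measure (X × ℝ))]
    [T2Space X] {f : X × ℝ → ℝ} (hf : ContinuousOn f (univ ×ˢ Ioi 0)) {B : Set X}
    (hB : IsCompact B) {s : ℝ} (hs : 0 < s) (T : ℝ) : IntegrableOn f (B ×ˢ Ioc s T) :=
  ((hf.mono fun _ hz => ⟨mem_univ _, hs.trans_le hz.2.1⟩).integrableOn_compact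
    (hB.prod isCompact_Icc)).mono_set (prod_mono le_rfl Ioc_subset_Icc_self)

variable {N : ℕ} {u F : Euc N → ℝ → ℝ} {s t T q : ℝ} {B : Set (Euc N)}

theorem integrableOn_slice
    (hu : ContinuousOn (fun p : Euc N × ℝ => u p.1 p.2) (univ ×ˢ Ioi 0)) (hB : IsCompact B)
    (ht : 0 < t) : IntegrableOn (fun x => u x t) B :=
  (hu.comp (f := fun x => (x, t)) (by fun_prop)
    fun _ _ => ⟨mem_univ _, ht⟩).integrableOn_compact hB

theorem setIntegral_prod_deriv
    (hu : ContDiffOn ℝ 1 (fun p : Euc N × ℝ => u p.1 p.2) (univ ×ˢ Ioi 0)) (hB : IsCompact B)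
    (hs : 0 < s) (hsT : s ≤ T) :
    ∫ z in B ×ˢ Ioc s T, deriv (u z.1) z.2 = (∫ x in B, u x T) - ∫ x in B, u x s := by
  have time := continuousOn_deriv_slice hu
  have pos {t : ℝ} (ht : t ∈ uIcc s T) : 0 < t := by
    rw [uIcc_of_le hsT] at ht
    exact hs.trans_le ht.1
  have fundamental (x : Euc N) : ∫ t in Ioc s T, deriv (u x) t = u x T - u x s := by
    rw [← intervalIntegral.integral_of_le hsT]
    refine intervalIntegral.integral_eq_sub_of_hasDerivAt
      (fun t ht => hasDerivAt_slice hu (pos ht) x) (ContinuousOn.intervalIntegrable ?_)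
    exact time.comp (f := fun t => (x, t)) (by fun_prop) fun t ht => ⟨mem_univ _, pos ht⟩
  rw [Measure.volume_eq_prod, setIntegral_prod _ (integrableOn_prod_Ioc time hB hs T)]
  simp only [fundamental]
  exact integral_sub (integrableOn_slice hu.continuousOn hB (hs.trans_le hsT))
    (integrableOn_slice hu.continuousOn hB hs)

theorem setIntegral_prod_flux
    (hu : ContDiffOn ℝ 2 (fun p : Euc N × ℝ => u p.1 p.2) (univ ×ˢ Ioi 0))
    (hF : ContDiffOn ℝ 2 (fun p : Euc N × ℝ => F p.1 p.2) (univ ×ˢ Ioi 0)) (hB : IsCompact B)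
    (hFB : ∀ t, 0 < t → tsupport (fun x => F x t) ⊆ B) (hs : 0 < s) (T : ℝ) :
    ∫ z in B ×ˢ Ioc s T, (lapl (fun y => u y z.2) z.1 * F z.1 z.2 -
      u z.1 z.2 * lapl (fun y => F y z.2) z.1) = 0 := by
  have integrable := integrableOn_prod_Ioc
    (((continuousOn_lapl_slice hu).mul hF.continuousOn).sub
      (hu.continuousOn.mul (continuousOn_lapl_slice hF))) hB hs T
  rw [IntegrableOn, Measure.volume_eq_prod, ← Measure.prod_restrict] at integrable
  rw [Measure.volume_eq_prod, ← Measure.prod_restrict]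
  refine (integral_prod_symm _ integrable).trans
    (setIntegral_eq_zero_of_forall_eq_zero fun t ht => ?_)
  have ht₀ : 0 < t := hs.trans ht.1
  have hu_t := contDiff_slice hu ht₀
  have hF_t := contDiff_slice hF ht₀
  have compact : HasCompactSupport fun x => F x t :=
    hB.of_isClosed_subset (isClosed_tsupport _) (hFB t ht₀)
  have outside {f : Euc N → ℝ} (hf : tsupport f ⊆ tsupport fun x => F x t) {x : Euc N}
      (hx : x ∉ B) : f x = 0 :=
    image_eq_zero_of_notMem_tsupport fun h => hx (hFB t ht₀ (hf h))
  calc _ = ∫ x, (lapl (fun y => u y t) x * F x t - u x t * lapl (fun y => F y t) x) :=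
        setIntegral_eq_integral_of_forall_compl_eq_zero fun x hx => by
          rw [outside (f := fun x => F x t) subset_rfl hx, outside (tsupport_lapl_subset _) hx,
            mul_zero, mul_zero, sub_zero]
    _ = 0 := by
        rw [integral_sub, integral_mul_lapl_eq hu_t hF_t compact, sub_self]
        · exact ((continuous_lapl hu_t).mul hF_t.continuous).integrable_of_hasCompactSupport
            compact.mul_left
        · exact (hu_t.continuous.mul (continuous_lapl hF_t)).integrable_of_hasCompactSupport
            (hasCompactSupport_lapl compact).mul_left

theorem IsSubsol.deriv_mul_le {K : Set (Euc N)} {g : ℝ} (hu : IsSubsol q u K)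
    (hF : ContDiffOn ℝ 1 (fun p : Euc N × ℝ => F p.1 p.2) (univ ×ˢ Ioi 0)) (ht : 0 < t) {x : Euc N}
    (hF₀ : 0 ≤ F x t) (h : u x t * (deriv (F x) t + lapl (fun y => F y t) x) ≤
      1 / 2 * (u x t ^ q * F x t) + g) :
    deriv (fun τ => u x τ * F x τ) t ≤
      lapl (fun y => u y t) x * F x t - u x t * lapl (fun y => F y t) x +
        (g - 1 / 2 * (u x t ^ q * F x t)) := by
  have leibniz : deriv (fun τ => u x τ * F x τ) t = _ :=
    ((hasDerivAt_slice (hu.contDiffOn.of_le one_le_two) ht x).mul (hasDerivAt_slice hF ht x)).deriv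
  rw [leibniz]
  linarith [mul_le_mul_of_nonneg_right (hu.deriv_sub_lapl_add_rpow_nonpos x ht) hF₀]

theorem IsSubsol.energy_le {K : Set (Euc N)} {g : Euc N × ℝ → ℝ} (hu : IsSubsol q u K) (hq : 0 ≤ q)
    (hF : ContDiffOn ℝ 2 (fun p : Euc N × ℝ => F p.1 p.2) (univ ×ˢ Ioi 0))
    (hF₀ : ∀ x t, 0 < t → 0 ≤ F x t) (hB : IsCompact B)
    (hFB : ∀ t, 0 < t → tsupport (fun x => F x t) ⊆ B) (hg : ContinuousOn g (univ ×ˢ Ioi 0))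
    (h : ∀ x t, 0 < t → u x t * (deriv (F x) t + lapl (fun y => F y t) x) ≤
      1 / 2 * (u x t ^ q * F x t) + g (x, t)) (hs : 0 < s) (hsT : s ≤ T) :
    1 / 2 * (∫ z in B ×ˢ Ioc s T, u z.1 z.2 ^ q * F z.1 z.2) + ∫ x in B, u x T * F x T ≤
      (∫ x in B, u x s * F x s) + ∫ z in B ×ˢ Ioc s T, g z := by
  have smooth := hu.contDiffOn
  have product := (smooth.mul hF).of_le one_le_two
  have int_g := integrableOn_prod_Ioc hg hB hs T
  have int_absorption : IntegrableOn (fun z : Euc N × ℝ => u z.1 z.2 ^ q * F z.1 z.2)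
      (B ×ˢ Ioc s T) := integrableOn_prod_Ioc
    ((smooth.continuousOn.rpow_const fun _ _ => .inr hq).mul hF.continuousOn) hB hs T
  have int_source : IntegrableOn (fun z => g z - 1 / 2 * (u z.1 z.2 ^ q * F z.1 z.2))
      (B ×ˢ Ioc s T) := int_g.sub (int_absorption.const_mul _)
  have int_flux : IntegrableOn (fun z : Euc N × ℝ => lapl (fun y => u y z.2) z.1 * F z.1 z.2 -
      u z.1 z.2 * lapl (fun y => F y z.2) z.1) (B ×ˢ Ioc s T) := integrableOn_prod_Ioc
    (((continuousOn_lapl_slice smooth).mul hF.continuousOn).sub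
      (smooth.continuousOn.mul (continuousOn_lapl_slice hF))) hB hs T
  have evolution : (∫ x in B, u x T * F x T) - ∫ x in B, u x s * F x s ≤
      (∫ z in B ×ˢ Ioc s T, g z) - 1 / 2 * ∫ z in B ×ˢ Ioc s T, u z.1 z.2 ^ q * F z.1 z.2 :=
    calc _ = ∫ z in B ×ˢ Ioc s T, deriv (fun t => u z.1 t * F z.1 t) z.2 :=
          (setIntegral_prod_deriv (u := fun x t => u x t * F x t) product hB hs hsT).symm
      _ ≤ ∫ z in B ×ˢ Ioc s T, (lapl (fun y => u y z.2) z.1 * F z.1 z.2 -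
            u z.1 z.2 * lapl (fun y => F y z.2) z.1 +
              (g z - 1 / 2 * (u z.1 z.2 ^ q * F z.1 z.2))) := by
          refine setIntegral_mono_on (integrableOn_prod_Ioc
            (continuousOn_deriv_slice (u := fun x t => u x t * F x t) product) hB hs T)
            (int_flux.add int_source) (hB.measurableSet.prod measurableSet_Ioc) fun z hz => ?_
          have hz₀ : 0 < z.2 := hs.trans hz.2.1
          exact hu.deriv_mul_le (hF.of_le one_le_two) hz₀ (hF₀ _ _ hz₀) (h _ _ hz₀)
      _ = _ := by
          rw [integral_add int_flux int_source, setIntegral_prod_flux smooth hF hB hFB hs T,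
            zero_add, integral_sub int_g (int_absorption.const_mul _), integral_const_mul]
  linarith

end Energy

section InitialLayer

variable {N : ℕ} {η : Euc N → ℝ} {m q ε κ t : ℝ}

theorem IsCutoff.testFn_eq_zero (hη : IsCutoff η) (hm : 1 ≤ m) (hε : 0 < ε) (hκ : 0 < κ)
    (ht : 0 < t) {x : Euc N} (hx : -log κ / ε ≤ ‖x‖) : testFn m η ε κ x t = 0 := by
  refine posPow_of_nonpos (by linarith) (sub_nonpos.2 ?_)
  have hμ : 0 ≤ (4 * m - 1) * ε := mul_nonneg (by linarith) hε.le
  calc barrier η ε ((4 * m - 1) * ε) x t ≤ weight ε ((4 * m - 1) * ε) x t :=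
        hη.barrier_le_weight _ _ ht x
    _ ≤ weight ε 0 x 0 := weight_le_weight_zero_zero hμ ht.le x
    _ ≤ rexp (-(ε * ‖x‖)) := weight_zero_zero_le_exp_neg_norm hε.le x
    _ ≤ rexp (log κ) := by
        rw [div_le_iff₀ hε] at hx
        gcongr
        linarith
    _ = κ := exp_log hκ

theorem IsCutoff.tsupport_testFn_subset (hη : IsCutoff η) (hm : 1 ≤ m) (hε : 0 < ε) (hκ : 0 < κ)
    (ht : 0 < t) :
    tsupport (fun x => testFn m η ε κ x t) ⊆ closedBall 0 (-log κ / ε) := by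
  refine closure_minimal (fun x hx => mem_closedBall_zero_iff.2 ?_) isClosed_closedBall
  by_contra! far
  exact hx (hη.testFn_eq_zero hm hε hκ ht far.le)

theorem IsCutoff.barrier_le_one_sub_heatPot (hη : IsCutoff η) {μ : ℝ} (hε : 0 ≤ ε) (hμ : 0 ≤ μ)
    (ht : 0 < t) (x : Euc N) : barrier η ε μ x t ≤ 1 - heatPot N η x t :=
  mul_le_of_le_one_right (sub_nonneg.2 (hη.heatPot_mem_Icc ht x).2)
    ((weight_le_weight_zero_zero hμ ht.le x).trans (weight_zero_zero_le_one hε x))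

theorem IsCutoff.testFn_le_one (hη : IsCutoff η) (hm : 1 ≤ m) (hε : 0 ≤ ε) (hκ : 0 ≤ κ)
    (ht : 0 < t) (x : Euc N) : testFn m η ε κ x t ≤ 1 := by
  have gap := hη.barrier_le_one_sub_heatPot hε (mul_nonneg (by linarith : 0 ≤ 4 * m - 1) hε) ht x
  exact posPow_le_one (by linarith) (by linarith [(hη.heatPot_mem_Icc ht x).1])

theorem IsCutoff.eventually_testFn_eq_zero (hη : IsCutoff η) (hm : 1 ≤ m) (hε : 0 ≤ ε)
    (hκ : 0 < κ) :
    ∀ᶠ t in nhdsWithin 0 (Ioi 0), ∀ x, 1 - κ / 2 < η x → testFn m η ε κ x t = 0 := by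
  obtain ⟨L, lipschitz⟩ := (hη.contDiff.of_le one_le_two).lipschitzWith_of_hasCompactSupport
    hη.hasCompactSupport one_ne_zero
  have modulus : Tendsto (fun t : ℝ => L * (6 * √t * 2 ^ ((N : ℝ) / 2))) (nhdsWithin 0 (Ioi 0))
      (nhds 0) :=
    (Continuous.tendsto' (by fun_prop) 0 0 (by simp)).mono_left nhdsWithin_le_nhds
  filter_upwards [self_mem_nhdsWithin, modulus.eventually_lt_const (half_pos hκ)] with t ht small
  intro x hx
  have close := (abs_le.1 (abs_heatPot_sub_le lipschitz hη.hasCompactSupport ht x)).1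
  have gap := hη.barrier_le_one_sub_heatPot hε (mul_nonneg (by linarith : 0 ≤ 4 * m - 1) hε) ht x
  exact posPow_of_nonpos (by linarith) (by linarith)

theorem IsSubsol.tendsto_setIntegral_mul_testFn {K B : Set (Euc N)} {u : Euc N → ℝ → ℝ}
    (hu : IsSubsol q u K) (hη : IsCutoff η) (hηK : ∀ x ∈ K, η x = 1) (hm : 2 < m) (hε : 0 ≤ ε)
    (hκ : 0 < κ) (hB : IsCompact B) :
    Tendsto (fun s => ∫ x in B, u x s * testFn m η ε κ x s) (nhdsWithin 0 (Ioi 0)) (nhds 0) := by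
  set E := B ∩ {x | η x ≤ 1 - κ / 2}
  have E_compact : IsCompact E :=
    hB.inter_right (isClosed_le hη.contDiff.continuous continuous_const)
  have E_subset : E ⊆ Kᶜ := fun x hx hxK => by
    have : η x ≤ 1 - κ / 2 := hx.2
    linarith [hηK x hxK]
  have trace := (hu.tendsto_sSup E_compact E_subset).const_mul (volume.real B)
  rw [mul_zero] at trace
  refine squeeze_zero' ?_ ?_ trace
  · filter_upwards [self_mem_nhdsWithin] with s hs
    exact integral_nonneg fun x => mul_nonneg (hu.nonneg x hs) (testFn_nonneg ..)
  · filter_upwards [self_mem_nhdsWithin, hη.eventually_testFn_eq_zero (m := m) (by linarith) hε hκ]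
      with s hs vanish
    have bounded : BddAbove ((fun x => u x s) '' E) :=
      E_compact.bddAbove_image (contDiff_slice hu.contDiffOn hs).continuous.continuousOn
    have integrable : IntegrableOn (fun x => u x s * testFn m η ε κ x s) B :=
      integrableOn_slice (u := fun x t => u x t * testFn m η ε κ x t)
        (hu.contDiffOn.continuousOn.mul (hη.contDiffOn_testFn hm ε κ).continuousOn) hB hs
    calc _ ≤ ∫ _ in B, sSup ((fun x => u x s) '' E) := by
          refine setIntegral_mono_on integrable (integrableOn_const hB.measure_lt_top.ne)
            hB.measurableSet fun x hx => ?_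
          rcases le_or_gt (η x) (1 - κ / 2) with far | near
          · exact (mul_le_of_le_one_right (hu.nonneg x hs)
              (hη.testFn_le_one (by linarith) hε hκ.le hs x)).trans
              (le_csSup bounded ⟨x, ⟨hx, far⟩, rfl⟩)
          · rw [vanish x near, mul_zero]
            exact Real.sSup_nonneg (forall_mem_image.2 fun y _ => hu.nonneg y hs)
      _ = _ := by rw [setIntegral_const, smul_eq_mul]

end InitialLayer

section Estimate

variable {N : ℕ} {η : Euc N → ℝ} {q R ε κ s T : ℝ} {K B : Set (Euc N)} {u : Euc N → ℝ → ℝ}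

theorem IsCutoff.setIntegral_error_le (hη : IsCutoff η) (hq : 1 < q) (hε : 0 < ε) (hκ : 0 ≤ κ)
    (B : Set (Euc N)) (hs : 0 < s) (hsT : s ≤ T) :
    ∫ z in B ×ˢ Ioc s T, errorConst q.conjExponent *
        (remainder η z.1 z.2 ^ q.conjExponent + κ ^ q.conjExponent * weight ε 0 z.1 0) ≤
      errorConst q.conjExponent *
        (Rnorm N q η + κ ^ q.conjExponent * (T * ∫ x : Euc N, weight ε 0 x 0)) := by
  have hp : 1 < q.conjExponent := (Real.HolderConjugate.conjExponent hq).symm.lt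
  set p := q.conjExponent
  have subset : B ×ˢ Ioc s T ⊆ (univ : Set (Euc N)) ×ˢ Ioi (0 : ℝ) :=
    prod_mono (subset_univ B) fun t ht => hs.trans ht.1
  have int_weight := (integrable_weight (N := N) hε 0 0).integrableOn (s := B)
  have int_product : IntegrableOn (fun z : Euc N × ℝ => κ ^ p * weight ε 0 z.1 0)
      (B ×ˢ Ioc s T) := by
    rw [IntegrableOn, Measure.volume_eq_prod, ← Measure.prod_restrict]
    exact (int_weight.comp_fst _).const_mul _
  have weight_mass : ∫ z in B ×ˢ Ioc s T, weight ε 0 z.1 0 ≤ T * ∫ x : Euc N, weight ε 0 x 0 :=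
    calc _ = (∫ x in B, weight ε 0 x 0) * (T - s) := by
          have factor := setIntegral_prod_mul (μ := volume) (ν := volume)
            (fun x : Euc N => weight ε 0 x 0) (fun _ : ℝ => 1) B (Ioc s T)
          simpa [Measure.volume_eq_prod, hsT] using factor
      _ ≤ (∫ x : Euc N, weight ε 0 x 0) * T := by
          have whole_nonneg : 0 ≤ ∫ x : Euc N, weight ε 0 x 0 :=
            integral_nonneg fun x => (weight_pos ε 0 x 0).le
          refine mul_le_mul ?_ (by linarith) (by linarith) whole_nonneg
          exact setIntegral_le_integral (integrable_weight hε 0 0)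
            (.of_forall fun x => (weight_pos ε 0 x 0).le)
      _ = _ := mul_comm _ _
  rw [integral_const_mul, integral_add ((hη.integrableOn_remainder_rpow hp).mono_set subset)
    int_product, integral_const_mul, ← hη.setIntegral_remainder_rpow_eq_Rnorm hq]
  refine mul_le_mul_of_nonneg_left (add_le_add ?_ ?_) (errorConst_nonneg p)
  · exact setIntegral_mono_set (hη.integrableOn_remainder_rpow hp)
      (.of_forall fun z => rpow_nonneg (remainder_nonneg ..) _) subset.eventuallyLE
  · exact mul_le_mul_of_nonneg_left weight_mass (rpow_nonneg hκ p)

theorem IsSubsol.testFn_estimate (hu : IsSubsol q u K) (hq : 1 < q) (hη : IsCutoff η)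
    (hηK : ∀ x ∈ K, η x = 1) (hε : 0 < ε) (hε₁ : ε ≤ 1) (hκ : 0 < κ) (hB : IsCompact B)
    (hκB : closedBall 0 (-log κ / ε) ⊆ B) (hs : 0 < s) (hsT : s ≤ T) :
    1 / 2 * (∫ z in B ×ˢ Ioc s T,
        u z.1 z.2 ^ q * testFn (2 * q.conjExponent) η ε κ z.1 z.2) +
      ∫ x in B, u x T * testFn (2 * q.conjExponent) η ε κ x T ≤
      errorConst q.conjExponent *
        (Rnorm N q η + κ ^ q.conjExponent * (T * ∫ x : Euc N, weight ε 0 x 0)) := by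
  have hpq := Real.HolderConjugate.conjExponent hq
  have error {s : ℝ} := hη.setIntegral_error_le (s := s) (T := T) hq hε hκ.le B
  set p := q.conjExponent
  have hp := hpq.symm.lt
  have hm : 2 < 2 * p := by linarith
  set Φ := testFn (2 * p) η ε κ
  have smooth : ContDiffOn ℝ 2 (fun z : Euc N × ℝ => Φ z.1 z.2) (univ ×ˢ Ioi 0) :=
    hη.contDiffOn_testFn hm ε κ
  have Φ_nonneg (x : Euc N) (t : ℝ) : 0 ≤ Φ x t := testFn_nonneg ..
  have source : ContinuousOn (fun z : Euc N × ℝ => errorConst p *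
      (remainder η z.1 z.2 ^ p + κ ^ p * weight ε 0 z.1 0)) (univ ×ˢ Ioi 0) :=
    continuousOn_const.mul ((hη.continuousOn_remainder_rpow (by linarith)).add
      (continuous_const.mul ((contDiff_weight_slice ε 0 0).continuous.comp
        continuous_fst)).continuousOn)
  have initial := (hu.tendsto_setIntegral_mul_testFn hη hηK hm hε.le hκ hB).add_const
    (errorConst p * (Rnorm N q η + κ ^ p * (T * ∫ x : Euc N, weight ε 0 x 0)))
  rw [zero_add] at initial
  refine ge_of_tendsto initial ?_
  filter_upwards [Ioc_mem_nhdsGT hs] with τ hτ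
  have energy := hu.energy_le (by linarith) smooth (fun x t _ => Φ_nonneg x t) hB
    (fun t ht => (hη.tsupport_testFn_subset (by linarith) hε hκ ht).trans hκB) source
    (fun x t ht => hη.mul_deriv_add_lapl_testFn_le hpq hε.le hε₁ hκ.le (hu.nonneg x ht) ht x)
    hτ.1 (hτ.2.trans hsT)
  have longer : ∫ z in B ×ˢ Ioc s T, u z.1 z.2 ^ q * Φ z.1 z.2 ≤
      ∫ z in B ×ˢ Ioc τ T, u z.1 z.2 ^ q * Φ z.1 z.2 := by
    refine setIntegral_mono_set (integrableOn_prod_Ioc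
      ((hu.contDiffOn.continuousOn.rpow_const fun _ _ => .inr (by linarith)).mul
        smooth.continuousOn) hB hτ.1 T) ?_
      (prod_mono le_rfl (Ioc_subset_Ioc_left hτ.2)).eventuallyLE
    filter_upwards [ae_restrict_mem (hB.measurableSet.prod measurableSet_Ioc)] with z hz
    exact mul_nonneg (rpow_nonneg (hu.nonneg _ (hτ.1.trans hz.2.1)) _) (Φ_nonneg _ _)
  linarith [error hτ.1 (hτ.2.trans hsT)]

end Estimate

section LowerBound

variable {N : ℕ} {η : Euc N → ℝ} {m R ε κ t : ℝ}

theorem exists_forall_half_le_weight (m A T : ℝ) (hm : 1 ≤ m) :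
    ∃ ε, 0 < ε ∧ ε ≤ 1 ∧ ∀ x : Euc N, ‖x‖ ≤ A → ∀ t ≤ T,
      1 / 2 ≤ weight ε ((4 * m - 1) * ε) x t := by
  have continuous : Continuous fun ε : ℝ => rexp (-(ε * √(1 + A ^ 2)) - (4 * m - 1) * ε * T) := by
    fun_prop
  have near_zero := (continuous.tendsto' 0 1 (by simp)).eventually_const_lt one_half_lt_one
  obtain ⟨ε, half, hε⟩ := ((near_zero.filter_mono (nhdsWithin_le_nhds (s := Ioi 0))).and
    (Ioc_mem_nhdsGT zero_lt_one)).exists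
  refine ⟨ε, hε.1, hε.2, fun x hx t ht => half.le.trans (exp_le_exp.2 (sub_le_sub ?_ ?_))⟩
  · refine neg_le_neg (mul_le_mul_of_nonneg_left (sqrt_le_sqrt ?_) hε.1.le)
    gcongr
  · exact mul_le_mul_of_nonneg_left ht (mul_nonneg (by linarith) hε.1.le)

theorem IsCutoff.rpow_le_testFn [NeZero N] (hη : IsCutoff η) (hsupp : tsupport η ⊆ ball 0 R)
    (hm : 0 ≤ m) (hκ : κ ≤ massBound N / 4) (ht : 0 < t) {x : Euc N} (hx : R ^ 2 ≤ ‖x‖ ^ 2 + t)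
    (half : 1 / 2 ≤ weight ε ((4 * m - 1) * ε) x t) :
    (massBound N / 4) ^ m ≤ testFn m η ε κ x t := by
  have mass := massBound_pos N
  have lower : massBound N / 4 ≤ barrier η ε ((4 * m - 1) * ε) x t - κ := by
    have gap := hη.massBound_le_one_sub_heatPot hsupp ht hx
    have : massBound N * (1 / 2) ≤ barrier η ε ((4 * m - 1) * ε) x t :=
      mul_le_mul gap half (by norm_num) (mass.le.trans gap)
    linarith
  rw [testFn, posPow_of_nonneg ((by positivity : 0 ≤ massBound N / 4).trans lower)]
  gcongr

end LowerBound

section Exhaustion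

theorem mul_setIntegral_le_setIntegral_mul {X : Type*} [MeasurableSpace X] {μ : Measure X}
    {f φ : X → ℝ} {a : ℝ} {D B : Set X} (hD : MeasurableSet D) (hB : MeasurableSet B) (hDB : D ⊆ B)
    (hf : IntegrableOn f D μ) (hfφ : IntegrableOn (fun x => f x * φ x) B μ)
    (hf₀ : ∀ x ∈ B, 0 ≤ f x) (hφ₀ : ∀ x ∈ B, 0 ≤ φ x) (hφ : ∀ x ∈ D, a ≤ φ x) :
    a * ∫ x in D, f x ∂μ ≤ ∫ x in B, f x * φ x ∂μ :=
  calc a * ∫ x in D, f x ∂μ = ∫ x in D, f x * a ∂μ := by rw [integral_mul_const, mul_comm]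
    _ ≤ ∫ x in D, f x * φ x ∂μ :=
        setIntegral_mono_on (hf.mul_const a) (hfφ.mono_set hDB) hD fun x hx =>
          mul_le_mul_of_nonneg_left (hφ x hx) (hf₀ x (hDB hx))
    _ ≤ ∫ x in B, f x * φ x ∂μ := by
        refine setIntegral_mono_set hfφ ?_ hDB.eventuallyLE
        filter_upwards [ae_restrict_mem hB] with x hx
        exact mul_nonneg (hf₀ x hx) (hφ₀ x hx)

theorem integrable_and_integral_add_le {X Y : Type*} [MeasurableSpace X] [MeasurableSpace Y]
    {μ : Measure X} {ν : Measure Y} {φ : ℕ → Set X} {ψ : ℕ → Set Y} {f : X → ℝ} {g : Y → ℝ} {C : ℝ}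
    (hφ : AECover μ atTop φ) (hψ : AECover ν atTop ψ) (hf : ∀ n, IntegrableOn f (φ n) μ)
    (hg : ∀ n, IntegrableOn g (ψ n) ν) (hf₀ : 0 ≤ᵐ[μ] f) (hg₀ : 0 ≤ᵐ[ν] g)
    (h : ∀ n, (∫ x in φ n, f x ∂μ) + ∫ y in ψ n, g y ∂ν ≤ C) :
    Integrable f μ ∧ Integrable g ν ∧ (∫ x, f x ∂μ) + ∫ y, g y ∂ν ≤ C := by
  have f_nonneg (n : ℕ) : 0 ≤ ∫ x in φ n, f x ∂μ :=
    integral_nonneg_of_ae (ae_restrict_of_ae hf₀)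
  have g_nonneg (n : ℕ) : 0 ≤ ∫ y in ψ n, g y ∂ν :=
    integral_nonneg_of_ae (ae_restrict_of_ae hg₀)
  have int_f := hφ.integrable_of_integral_bounded_of_nonneg_ae C hf hf₀
    (.of_forall fun n => by linarith [h n, g_nonneg n])
  have int_g := hψ.integrable_of_integral_bounded_of_nonneg_ae C hg hg₀
    (.of_forall fun n => by linarith [h n, f_nonneg n])
  exact ⟨int_f, int_g, le_of_tendsto' ((hφ.integral_tendsto_of_countably_generated int_f).add
    (hψ.integral_tendsto_of_countably_generated int_g)) h⟩

variable {N : ℕ} {η : Euc N → ℝ} {q A R s T : ℝ} {K : Set (Euc N)} {u : Euc N → ℝ → ℝ}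

/-- The constant of the a priori estimate: twice the Young constant over the lower bound of the test
function outside the paraboloid. -/
def estimateConst (N : ℕ) (q : ℝ) : ℝ :=
  2 * errorConst q.conjExponent / (massBound N / 4) ^ (2 * q.conjExponent)

theorem estimateConst_pos (N : ℕ) (hq : 1 < q) : 0 < estimateConst N q := by
  have hp := (Real.HolderConjugate.conjExponent hq).symm.pos
  have mass := massBound_pos N
  rw [estimateConst, errorConst]
  positivity

theorem IsSubsol.localized_estimate [NeZero N] {ε κ : ℝ} (hu : IsSubsol q u K) (hq : 1 < q)
    (hη : IsCutoff η) (hηK : ∀ x ∈ K, η x = 1) (hsupp : tsupport η ⊆ ball 0 R) (hRT : R ^ 2 ≤ T)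
    {D : Set (Euc N × ℝ)} (hD : MeasurableSet D) (hDA : D ⊆ closedBall 0 A ×ˢ Ioc s T)
    (hDR : ∀ z ∈ D, R ^ 2 ≤ ‖z.1‖ ^ 2 + z.2) (hs : 0 < s) (hsT : s ≤ T) (hε : 0 < ε) (hε₁ : ε ≤ 1)
    (half : ∀ x : Euc N, ‖x‖ ≤ A → ∀ t ≤ T,
      1 / 2 ≤ weight ε ((4 * (2 * q.conjExponent) - 1) * ε) x t)
    (hκ : 0 < κ) (hκ' : κ ≤ massBound N / 4) :
    (massBound N / 4) ^ (2 * q.conjExponent) *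
        (1 / 2 * (∫ z in D, u z.1 z.2 ^ q) + ∫ x in closedBall 0 A, u x T) ≤
      errorConst q.conjExponent * (Rnorm N q η +
        κ ^ q.conjExponent * (T * ∫ x : Euc N, weight ε 0 x 0)) := by
  have hp := (Real.HolderConjugate.conjExponent hq).symm.lt
  set p := q.conjExponent
  have hT : 0 < T := hs.trans_le hsT
  set B : Set (Euc N) := closedBall 0 A ∪ closedBall 0 (-log κ / ε)
  have hB : IsCompact B := (isCompact_closedBall _ _).union (isCompact_closedBall _ _)
  have hDB : D ⊆ B ×ˢ Ioc s T := hDA.trans (prod_mono subset_union_left le_rfl)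
  have lower {x : Euc N} {t : ℝ} (hx : x ∈ closedBall 0 A) (ht : t ∈ Ioc 0 T)
      (hxt : R ^ 2 ≤ ‖x‖ ^ 2 + t) : (massBound N / 4) ^ (2 * p) ≤ testFn (2 * p) η ε κ x t :=
    hη.rpow_le_testFn hsupp (by linarith) hκ' ht.1 hxt
      (half x (mem_closedBall_zero_iff.1 hx) t ht.2)
  have cont_u := hu.contDiffOn.continuousOn
  have cont_uq : ContinuousOn (fun z : Euc N × ℝ => u z.1 z.2 ^ q) (univ ×ˢ Ioi 0) :=
    cont_u.rpow_const fun _ _ => .inr (by linarith)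
  have cont_Φ := (hη.contDiffOn_testFn (m := 2 * p) (by linarith) ε κ).continuousOn
  have absorption : (massBound N / 4) ^ (2 * p) * ∫ z in D, u z.1 z.2 ^ q ≤
      ∫ z in B ×ˢ Ioc s T, u z.1 z.2 ^ q * testFn (2 * p) η ε κ z.1 z.2 :=
    mul_setIntegral_le_setIntegral_mul hD (hB.measurableSet.prod measurableSet_Ioc) hDB
      ((integrableOn_prod_Ioc cont_uq hB hs T).mono_set hDB)
      (integrableOn_prod_Ioc (cont_uq.mul cont_Φ) hB hs T)
      (fun z hz => rpow_nonneg (hu.nonneg _ (hs.trans hz.2.1)) q) (fun z _ => testFn_nonneg ..)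
      fun z hz => lower (hDA hz).1 (Ioc_subset_Ioc_left hs.le (hDA hz).2) (hDR z hz)
  have terminal : (massBound N / 4) ^ (2 * p) * ∫ x in closedBall 0 A, u x T ≤
      ∫ x in B, u x T * testFn (2 * p) η ε κ x T :=
    mul_setIntegral_le_setIntegral_mul measurableSet_closedBall hB.measurableSet subset_union_left
      (integrableOn_slice cont_u (isCompact_closedBall _ _) hT)
      (integrableOn_slice (u := fun x t => u x t * testFn (2 * p) η ε κ x t) (cont_u.mul cont_Φ)
        hB hT) (fun x _ => hu.nonneg x hT) (fun x _ => testFn_nonneg ..)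
      fun x hx => lower hx ⟨hT, le_rfl⟩ (hRT.trans (le_add_of_nonneg_left (sq_nonneg _)))
  linarith [hu.testFn_estimate hq hη hηK hε hε₁ hκ hB subset_union_right hs hsT]

theorem IsSubsol.compact_estimate [NeZero N] (hu : IsSubsol q u K) (hq : 1 < q)
    (hη : IsCutoff η) (hηK : ∀ x ∈ K, η x = 1) (hsupp : tsupport η ⊆ ball 0 R) (hRT : R ^ 2 ≤ T)
    {D : Set (Euc N × ℝ)} (hD : MeasurableSet D) (hDA : D ⊆ closedBall 0 A ×ˢ Ioc s T)
    (hDR : ∀ z ∈ D, R ^ 2 ≤ ‖z.1‖ ^ 2 + z.2) (hs : 0 < s) (hsT : s ≤ T) :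
    (∫ z in D, u z.1 z.2 ^ q) + ∫ x in closedBall 0 A, u x T ≤
      estimateConst N q * Rnorm N q η := by
  have hp := (Real.HolderConjugate.conjExponent hq).symm.lt
  obtain ⟨ε, hε, hε₁, half⟩ := exists_forall_half_le_weight (N := N) (2 * q.conjExponent) A T
    (by linarith)
  have estimate {κ : ℝ} := hu.localized_estimate (κ := κ) hq hη hηK hsupp hRT hD hDA hDR hs hsT
    hε hε₁ half
  have level_to_zero : Tendsto (fun κ : ℝ => errorConst q.conjExponent * (Rnorm N q η +
      κ ^ q.conjExponent * (T * ∫ x : Euc N, weight ε 0 x 0))) (nhdsWithin 0 (Ioi 0))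
      (nhds (errorConst q.conjExponent * Rnorm N q η)) := by
    have continuous := continuous_rpow_const (zero_le_one.trans hp.le)
    exact (Continuous.tendsto' (by fun_prop) 0 _
      (by rw [zero_rpow (by linarith), zero_mul, add_zero])).mono_left nhdsWithin_le_nhds
  have limit := ge_of_tendsto level_to_zero (by
    filter_upwards [Ioc_mem_nhdsGT (div_pos (massBound_pos N) four_pos)] with κ hκ
    exact estimate hκ.1 hκ.2)
  have terminal_nonneg : 0 ≤ ∫ x in closedBall 0 A, u x T :=
    integral_nonneg fun x => hu.nonneg x (hs.trans_le hsT)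
  have lower_pos : 0 < (massBound N / 4) ^ (2 * q.conjExponent) :=
    rpow_pos_of_pos (div_pos (massBound_pos N) four_pos) _
  rw [estimateConst, div_mul_eq_mul_div, le_div_iff₀ lower_pos]
  nlinarith [mul_nonneg lower_pos.le terminal_nonneg]

theorem aecover_closedBall_prod_Ioc {μ : Measure (Euc N × ℝ)} {D : Set (Euc N × ℝ)}
    (hD : MeasurableSet D) (hDT : D ⊆ univ ×ˢ Ioc 0 T) :
    AECover (μ.restrict D) atTop
      fun n : ℕ => closedBall (0 : Euc N) n ×ˢ Ioc (T / (n + 1)) T := by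
  refine aecover_restrict_of_ae_imp hD (.of_forall fun z hz => ?_)
    fun n => measurableSet_closedBall.prod measurableSet_Ioc
  have time : Tendsto (fun n : ℕ => T / ((n : ℝ) + 1)) atTop (nhds 0) :=
    (tendsto_const_div_atTop_nhds_zero_nat T).comp (tendsto_add_atTop_nat 1) |>.congr fun n => by
      simp
  filter_upwards [time.eventually_lt_const (hDT hz).2.1, eventually_ge_atTop ⌈‖z.1‖⌉₊]
    with n early far
  exact ⟨mem_closedBall_zero_iff.2 (Nat.ceil_le.1 far), early, (hDT hz).2.2⟩

end Exhaustion

/-- Integrability is part of the conclusion: the Bochner integral of a non-integrable function is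
`0`, so the inequality alone would not say that the two integrals are finite. -/
theorem stmt11_general (N : ℕ) (hN : 1 ≤ N) (q : ℝ) (hq : 1 < q) :
    ∃ C : ℝ, 0 < C ∧ ∀ R T : ℝ, 0 < R → R ^ 2 ≤ T → ∀ (K : Set (Euc N)) (η : Euc N → ℝ),
      IsCutoff η → tsupport η ⊆ ball 0 R → (∀ x ∈ K, η x = 1) → ∀ u, IsSubsol q u K →
        IntegrableOn (fun z : Euc N × ℝ => u z.1 z.2 ^ q)
          ((univ ×ˢ Ioc 0 T) \ {z | ‖z.1‖ ^ 2 + z.2 ≤ R ^ 2}) ∧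
        Integrable (fun x => u x T) ∧
        (∫ z in (univ ×ˢ Ioc 0 T) \ {z | ‖z.1‖ ^ 2 + z.2 ≤ R ^ 2}, u z.1 z.2 ^ q) +
          (∫ x, u x T) ≤ C * Rnorm N q η := by
  have : NeZero N := ⟨by omega⟩
  refine ⟨estimateConst N q, estimateConst_pos N hq, fun R T hR hRT K η hη hsupp hηK u hu => ?_⟩
  have hT : 0 < T := (pow_pos hR 2).trans_le hRT
  set D : Set (Euc N × ℝ) := (univ ×ˢ Ioc 0 T) \ {z | ‖z.1‖ ^ 2 + z.2 ≤ R ^ 2}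
  have hD : MeasurableSet D := (MeasurableSet.univ.prod measurableSet_Ioc).diff
    (isClosed_le (by fun_prop) continuous_const).measurableSet
  have early (n : ℕ) : 0 < T / (n + 1) ∧ T / (n + 1) ≤ T :=
    ⟨by positivity, div_le_self hT.le (by simp)⟩
  refine integrable_and_integral_add_le (aecover_closedBall_prod_Ioc hD sdiff_subset)
    (aecover_closedBall (x := 0) tendsto_natCast_atTop_atTop) (fun n => ?_) (fun n => ?_) ?_ ?_
    fun n => ?_
  · exact (integrableOn_prod_Ioc (hu.contDiffOn.continuousOn.rpow_const fun _ _ => .inr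
      (by linarith)) (isCompact_closedBall _ _) (early n).1 T).restrict
  · exact integrableOn_slice hu.contDiffOn.continuousOn (isCompact_closedBall _ _) hT
  · filter_upwards [ae_restrict_mem hD] with z hz
    exact rpow_nonneg (hu.nonneg _ hz.1.2.1) q
  · exact .of_forall fun x => hu.nonneg x hT
  · rw [Measure.restrict_restrict (measurableSet_closedBall.prod measurableSet_Ioc)]
    exact hu.compact_estimate hq hη hηK hsupp hRT
      ((measurableSet_closedBall.prod measurableSet_Ioc).inter hD) inter_subset_left
      (fun z hz => (not_le.1 hz.2.2).le) (early n).1 (early n).2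

/-- Proposition 2.13: global `L^q`-estimate outside the parabolic region `ℰ_{r+ρ}`. -/
theorem stmt11 (N : ℕ) (hN : 1 ≤ N) (q : ℝ) (hq : 1 < q) :
    ∃ C : ℝ, 0 < C ∧
      ∀ r ρ T : ℝ, 0 < r → 0 < ρ → (r + ρ) ^ 2 ≤ T →
        ∀ K : Set (Euc N), IsCompact K → K ⊆ Metric.ball (0 : Euc N) r →
          ∀ η : Euc N → ℝ, TestFun N r ρ K η →
            ∀ u : Euc N → ℝ → ℝ, IsSol N q u K →
              (∫ p in (Set.univ ×ˢ Set.Ioc (0 : ℝ) T) \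
                    {p : Euc N × ℝ | ‖p.1‖ ^ 2 + p.2 ≤ (r + ρ) ^ 2},
                  u p.1 p.2 ^ q) + (∫ x, u x T) ≤ C * Rnorm N q η := by
  obtain ⟨C, hC, estimate⟩ := stmt11_general N hN q hq
  exact ⟨C, hC, fun r ρ T hr hρ hT K _ _ η hη u hu => (estimate (r + ρ) T (add_pos hr hρ) hT K η
    hη.isCutoff hη.2.2.1 hη.2.2.2.2 u hu.isSubsol).2.2⟩

end
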